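/- Let q ≥ 5·10^50 be a natural number and let χ be a primitive quadratic (real-valued, non-principal, χ² principal) Dirichlet character modulo q with χ(−1) = −1. Then L(1, χ) ≤ (9/20) log q. -/

import Mathlib

open scoped ComplexOrder

/-!
The number `L(1, χ)` is compared with a smoothed sum `∑ χ(n) ρ(n / N) / n` of length `2N`, where
`N ≈ 30 √q`. The cutoff `ρ` (`rho`) is minus the primitive of a tent function (`hat`), so the
derivative of the smoothed sum in the scale is a tent sum of `χ`. The tent is the convolution square
of an interval; since a primitive quadratic character is essentially its own Fourier transform,
Parseval gives the bound `√q` for these tent sums, without the logarithm of the Pólya–Vinogradov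
inequality (`norm_double_sum_le`). Hence passing from the smoothed sum at scale `N` to `L(1, χ)`
costs only about `√q / N` (`LFunction_one_re_le`).

The trivial bound for the smoothed sum is `U = log (2N) ≈ (log q) / 2`, so it has to be improved by
more than a tenth of itself. Write `x` for `χ` as a real completely multiplicative function. The
tent sum bound says that `x` barely correlates with the tent at scale `N`, which forces
`∑ (1 - x p) / p ≥ 29 / 30` over the primes `p ≤ 2N` (`prime_defect`). One picks a set `B` of such
primes with mass `Q = ∑_{p ∈ B} (1 - x p) / p ≤ 1` as large as possible. The defect
`∑ (1 - x n) ρ(n / N) / n` is then bounded below by the second Bonferroni inequality over `B`; the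
condition `Q ≤ 1` ensures that the remaining factor of `x` can only help (`defect_ge_pairs`).

A prime `p ∈ B` contributes its mass times at least about `U / 2` when `p ≤ √(2N)`, and times
`U - log p` otherwise. If the small primes alone have mass more than `1`, then `Q ≥ 1 / 2` is
available with the weight `U / 2`, and the sum is at most `3U / 4 + 1`. If not, then `Q ≥ 29 / 30`,
and since the mass of a set of primes is at most `2 ∑ 1 / p`, Mertens' theorem limits how much of it
can sit on primes with `log p > 0.6 U`. This gives the bound `0.8015 U + 2.04` (`smooth_le`), and
`0.8015 / 2 < 9 / 20` leaves room for the constants once `log q ≥ 116.7`.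
-/

namespace OddQuadratic

open Finset

/-! ### Mertens estimates for primes -/

/-- Legendre's identity for `log X!`: sum `log n = ∑_{d ∣ n} Λ d` over `n ≤ X`. -/
lemma sum_log_eq_sum_vonMangoldt (X : ℕ) :
    ∑ n ∈ Ioc 0 X, Real.log n
      = ∑ d ∈ Ioc 0 X, ArithmeticFunction.vonMangoldt d * ((X / d : ℕ) : ℝ) := by
  have h := ArithmeticFunction.sum_Ioc_mul_zeta_eq_sum ArithmeticFunction.vonMangoldt X
  rw [ArithmeticFunction.vonMangoldt_mul_zeta] at h
  simpa using h

/-- The upper half of Mertens' first theorem. Replacing `⌊X / d⌋` by `X / d` in the identity for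
`log X!` costs at most `ψ X`. -/
lemma sum_vonMangoldt_div_le (X : ℕ) (hX : 1 ≤ X) :
    ∑ d ∈ Ioc 0 X, ArithmeticFunction.vonMangoldt d / (d : ℝ)
      ≤ Real.log X + Chebyshev.psi X / X := by
  have hX0 : (0 : ℝ) < X := by exact_mod_cast hX
  have h1 : ∑ d ∈ Ioc 0 X, ArithmeticFunction.vonMangoldt d / (d : ℝ) * X
      ≤ ∑ d ∈ Ioc 0 X, (ArithmeticFunction.vonMangoldt d * ((X / d : ℕ) : ℝ)
          + ArithmeticFunction.vonMangoldt d) := by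
    refine sum_le_sum fun d hd ↦ ?_
    have hd0 : 0 < d := (mem_Ioc.1 hd).1
    have hd1 : (0 : ℝ) < d := by exact_mod_cast hd0
    have h2 : (X : ℝ) / d ≤ ((X / d : ℕ) : ℝ) + 1 := by
      rw [← Nat.floor_div_eq_div (K := ℝ)]
      exact (Nat.lt_floor_add_one _).le
    have h3 := ArithmeticFunction.vonMangoldt_nonneg (n := d)
    calc ArithmeticFunction.vonMangoldt d / (d : ℝ) * X
        = ArithmeticFunction.vonMangoldt d * (X / d) := by ring
      _ ≤ ArithmeticFunction.vonMangoldt d * (((X / d : ℕ) : ℝ) + 1) := by gcongr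
      _ = _ := by ring
  rw [sum_add_distrib, ← sum_log_eq_sum_vonMangoldt, ← sum_mul] at h1
  have h4 : ∑ n ∈ Ioc 0 X, Real.log n ≤ X * Real.log X := by
    have : ∑ n ∈ Ioc 0 X, Real.log n ≤ ∑ n ∈ Ioc 0 X, Real.log X := by
      refine sum_le_sum fun n hn ↦ ?_
      have := mem_Ioc.1 hn
      exact Real.log_le_log (by exact_mod_cast this.1) (by exact_mod_cast this.2)
    simpa using this
  have h5 : ∑ d ∈ Ioc 0 X, ArithmeticFunction.vonMangoldt d = Chebyshev.psi X := by
    simp [Chebyshev.psi]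
  rw [h5] at h1
  rw [← mul_le_mul_iff_left₀ hX0, add_mul, div_mul_cancel₀ _ hX0.ne']
  linarith

/-- Stirling's lower bound `log n! ≥ n log n - n`. -/
lemma mul_log_sub_le_sum_log (n : ℕ) :
    n * Real.log n - n ≤ ∑ k ∈ Ioc 0 n, Real.log k := by
  induction n with
  | zero => simp
  | succ n ih =>
    rw [sum_Ioc_succ_top (Nat.zero_le n)]
    rcases Nat.eq_zero_or_pos n with rfl | hn
    · simp
    have hn0 : (0 : ℝ) < n := by exact_mod_cast hn
    have h1 : Real.log ((n + 1 : ℝ) / n) ≤ (n + 1 : ℝ) / n - 1 :=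
      Real.log_le_sub_one_of_pos (by positivity)
    rw [Real.log_div (by positivity) (by positivity)] at h1
    have h2 : n * (Real.log (n + 1 : ℝ) - Real.log n) ≤ 1 := by
      calc n * (Real.log (n + 1 : ℝ) - Real.log n) ≤ n * ((n + 1 : ℝ) / n - 1) := by gcongr
        _ = 1 := by field_simp; ring
    push_cast
    nlinarith

/-- The lower half of Mertens' first theorem. -/
lemma log_sub_one_le_sum_vonMangoldt_div (n : ℕ) (hn : 1 ≤ n) :
    Real.log n - 1 ≤ ∑ d ∈ Ioc 0 n, ArithmeticFunction.vonMangoldt d / (d : ℝ) := by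
  have hn0 : (0 : ℝ) < n := by exact_mod_cast hn
  have h1 : ∑ d ∈ Ioc 0 n, ArithmeticFunction.vonMangoldt d * ((n / d : ℕ) : ℝ)
      ≤ (∑ d ∈ Ioc 0 n, ArithmeticFunction.vonMangoldt d / (d : ℝ)) * n := by
    rw [sum_mul]
    refine sum_le_sum fun d hd ↦ ?_
    have h3 := ArithmeticFunction.vonMangoldt_nonneg (n := d)
    calc _ ≤ ArithmeticFunction.vonMangoldt d * ((n : ℝ) / d) := by
          gcongr; exact Nat.cast_div_le
      _ = _ := by ring
  rw [← sum_log_eq_sum_vonMangoldt] at h1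
  have h2 := mul_log_sub_le_sum_log n
  rw [← mul_le_mul_iff_left₀ hn0]
  linarith

/-- A one-sided Mertens estimate over the primes `p ≤ X` with `log p > s`. -/
lemma sum_primes_log_div_le (X : ℕ) (hX : 59 ≤ Real.log X) (s : ℝ) (hs : 35 ≤ s)
    (hsX : s ≤ Real.log X) :
    ∑ p ∈ Ioc 0 X with Nat.Prime p ∧ s < Real.log p, Real.log p / p
      ≤ Real.log X - s + 2.45 := by
  have hX0 : X ≠ 0 := by rintro rfl; norm_num at hX
  have hX1 : 1 ≤ X := Nat.one_le_iff_ne_zero.2 hX0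
  have hXr : (0 : ℝ) < X := by exact_mod_cast hX1
  set U := Real.log X with hU
  have hexpU : Real.exp U = X := Real.exp_log hXr
  -- Split the full sum at `n = ⌊exp s⌋`.
  set n := ⌊Real.exp s⌋₊ with hn
  have hes : (36 : ℝ) ≤ Real.exp s := by linarith [Real.add_one_le_exp s]
  have hes2 : s ^ 2 / 2 ≤ Real.exp s := by
    linarith [Real.quadratic_le_exp_of_nonneg (x := s) (by linarith)]
  have hnle : (n : ℝ) ≤ Real.exp s := Nat.floor_le (Real.exp_pos s).le
  have hnlt : Real.exp s < n + 1 := Nat.lt_floor_add_one _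
  have hn600 : (600 : ℝ) ≤ n := by nlinarith
  have hn1 : 1 ≤ n := by
    have : (1 : ℝ) ≤ n := by linarith
    exact_mod_cast this
  have hnX : n ≤ X := by
    have : (n : ℝ) ≤ X := hnle.trans (by rw [← hexpU]; exact Real.exp_le_exp.2 hsX)
    exact_mod_cast this
  have hlogn : s - 0.01 ≤ Real.log n := by
    have h1 : s ≤ Real.log (n + 1) := by
      rw [Real.le_log_iff_exp_le (by positivity)]; exact hnlt.le
    have h2 : Real.log ((n + 1 : ℝ) / n) ≤ (n + 1 : ℝ) / n - 1 :=
      Real.log_le_sub_one_of_pos (by positivity)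
    rw [Real.log_div (by positivity) (by positivity)] at h2
    have h3 : (n + 1 : ℝ) / n - 1 ≤ 0.01 := by
      rw [sub_le_iff_le_add, div_le_iff₀ (by positivity)]; linarith
    linarith
  have hsplit : ∑ d ∈ Ioc 0 X, ArithmeticFunction.vonMangoldt d / (d : ℝ)
      = ∑ d ∈ Ioc 0 n, ArithmeticFunction.vonMangoldt d / (d : ℝ)
        + ∑ d ∈ Ioc n X, ArithmeticFunction.vonMangoldt d / (d : ℝ) := by
    rw [sum_Ioc_consecutive _ (Nat.zero_le _) hnX]
  have hpr : ∑ p ∈ Ioc 0 X with Nat.Prime p ∧ s < Real.log p, Real.log p / p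
      ≤ ∑ d ∈ Ioc n X, ArithmeticFunction.vonMangoldt d / (d : ℝ) := by
    calc _ = ∑ p ∈ Ioc 0 X with Nat.Prime p ∧ s < Real.log p,
          ArithmeticFunction.vonMangoldt p / (p : ℝ) := by
          refine sum_congr rfl fun p hp ↦ ?_
          rw [ArithmeticFunction.vonMangoldt_apply_prime (mem_filter.1 hp).2.1]
      _ ≤ _ := by
          refine sum_le_sum_of_subset_of_nonneg ?_ ?_
          · intro p hp
            simp only [mem_filter, mem_Ioc] at hp ⊢
            refine ⟨?_, hp.1.2⟩
            have hp0 : (0 : ℝ) < p := by exact_mod_cast hp.1.1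
            have h1 : Real.exp s < p := by
              rw [← Real.lt_log_iff_exp_lt hp0]; exact hp.2.2
            exact_mod_cast hnle.trans_lt h1
          · intro i _ _
            exact div_nonneg ArithmeticFunction.vonMangoldt_nonneg (by positivity)
  have hup := sum_vonMangoldt_div_le X hX1
  have hlo := log_sub_one_le_sum_vonMangoldt_div n hn1
  have hpsi : Chebyshev.psi X / X ≤ 1.42 := by
    rw [div_le_iff₀ hXr]
    have h1 := Chebyshev.psi_le (x := X) (by exact_mod_cast hX1)
    rw [← hU] at h1
    have hl4 : Real.log 4 ≤ 1.3863 := by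
      have : Real.log 4 = 2 * Real.log 2 := by
        rw [show (4 : ℝ) = 2 ^ 2 by norm_num, Real.log_pow]; norm_num
      linarith [Real.log_two_lt_d9]
    -- `exp (U / 2) ≥ (U / 2) ^ 3 / 6` makes the prime-power term negligible.
    have hsq : √(X : ℝ) = Real.exp (U / 2) := by
      rw [← hexpU, Real.exp_half]
    have hX2 : (X : ℝ) = √(X : ℝ) * √(X : ℝ) := (Real.mul_self_sqrt hXr.le).symm
    have h3 : (U / 2) ^ 3 / 6 ≤ √(X : ℝ) := by
      rw [hsq]
      have := Real.pow_div_factorial_le_exp (U / 2) (by linarith) 3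
      norm_num [Nat.factorial] at this ⊢
      linarith
    have h4 : 2 * U ≤ 0.0337 * √(X : ℝ) := by
      have : 0.0337 * ((U / 2) ^ 3 / 6) ≤ 0.0337 * √(X : ℝ) := by gcongr
      nlinarith [mul_nonneg (show (0 : ℝ) ≤ U by linarith) (show (0 : ℝ) ≤ U - 59 by linarith),
        mul_nonneg (mul_nonneg (show (0 : ℝ) ≤ U by linarith) (show (0 : ℝ) ≤ U - 59 by linarith))
          (show (0 : ℝ) ≤ U + 59 by linarith)]
    have h5 : 2 * √(X : ℝ) * U ≤ 0.0337 * X := by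
      calc 2 * √(X : ℝ) * U = √(X : ℝ) * (2 * U) := by ring
        _ ≤ √(X : ℝ) * (0.0337 * √(X : ℝ)) := by gcongr
        _ = 0.0337 * (√(X : ℝ) * √(X : ℝ)) := by ring
        _ = 0.0337 * X := by rw [← hX2]
    have h6 : Real.log 4 * X ≤ 1.3863 * X := by gcongr
    linarith
  linarith

/-- Partial summation of `sum_primes_log_div_le` against the weight `(1 - y / log p)⁺`, written
as `∫ y / s ^ 2` over `y < s < log p`. -/
lemma sum_primes_max_le (X : ℕ) (hX : 59 ≤ Real.log X) (y : ℝ) (hy : 35 ≤ y)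
    (hyX : y ≤ Real.log X) :
    ∑ p ∈ Ioc 0 X with Nat.Prime p, max (Real.log p - y) 0 / p
      ≤ Real.log X - y - y * Real.log (Real.log X / y) + 2.45 * (1 - y / Real.log X) := by
  set U := Real.log X with hU
  have hy0 : 0 < y := by linarith
  have hU0 : 0 < U := by linarith
  have hcont : ContinuousOn (fun s : ℝ ↦ y / s ^ 2) (Set.uIcc y U) := by
    rw [Set.uIcc_of_le hyX]
    refine ContinuousOn.div continuousOn_const (by fun_prop) fun s hs ↦ ?_
    have : 0 < s := hy0.trans_le hs.1
    positivity
  have hii : IntervalIntegrable (fun s : ℝ ↦ y / s ^ 2) MeasureTheory.volume y U :=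
    hcont.intervalIntegrable
  have hiInd (t : ℝ) : IntervalIntegrable
      (fun s : ℝ ↦ if s < t then y / s ^ 2 else 0) MeasureTheory.volume y U := by
    rw [intervalIntegrable_iff] at hii ⊢
    have := hii.indicator (measurableSet_Iio (a := t))
    refine this.congr (Filter.Eventually.of_forall fun s ↦ ?_)
    simp [Set.indicator]
  have hanti (a b : ℝ) (ha : 0 < a) (hab : a ≤ b) :
      ∫ s in a..b, y / s ^ 2 = y / a - y / b := by
    have : ∀ s ∈ Set.uIcc a b, HasDerivAt (fun s : ℝ ↦ - (y / s)) (y / s ^ 2) s := by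
      intro s hs
      rw [Set.uIcc_of_le hab] at hs
      have hs0 : s ≠ 0 := (ha.trans_le hs.1).ne'
      have := ((hasDerivAt_inv hs0).const_mul y).neg
      convert! this using 1
      field_simp
    rw [intervalIntegral.integral_eq_sub_of_hasDerivAt this]
    · ring
    · refine ContinuousOn.intervalIntegrable ?_
      rw [Set.uIcc_of_le hab]
      refine ContinuousOn.div continuousOn_const (by fun_prop) fun s hs ↦ ?_
      have : 0 < s := ha.trans_le hs.1
      positivity
  have hpt (p : ℕ) (hp : p ∈ {p ∈ Ioc 0 X | p.Prime}) : max (Real.log p - y) 0 / p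
      ≤ ∫ s in y..U, (Real.log p / p) * (if s < Real.log p then y / s ^ 2 else 0) := by
    rw [mem_filter, mem_Ioc] at hp
    have hp0 : (0 : ℝ) < p := by exact_mod_cast hp.1.1
    have hl0 : 0 ≤ Real.log p := Real.log_natCast_nonneg p
    rw [intervalIntegral.integral_const_mul]
    set t := Real.log p with ht
    have htU : t ≤ U := Real.log_le_log hp0 (by exact_mod_cast hp.1.2)
    rcases le_or_gt t y with h | h
    · rw [max_eq_right (by linarith), zero_div]
      refine mul_nonneg (by positivity) (intervalIntegral.integral_nonneg hyX fun s _ ↦ ?_)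
      split_ifs <;> positivity
    · have h1 : y / y - y / t ≤ ∫ s in y..U, (if s < t then y / s ^ 2 else 0) := by
        have i1 : IntervalIntegrable
            (fun s : ℝ ↦ if s < t then y / s ^ 2 else 0) MeasureTheory.volume y t :=
          (hiInd t).mono_set (by
            rw [Set.uIcc_of_le h.le, Set.uIcc_of_le hyX]; exact Set.Icc_subset_Icc_right htU)
        have i2 : IntervalIntegrable
            (fun s : ℝ ↦ if s < t then y / s ^ 2 else 0) MeasureTheory.volume t U :=
          (hiInd t).mono_set (by
            rw [Set.uIcc_of_le htU, Set.uIcc_of_le hyX]; exact Set.Icc_subset_Icc_left h.le)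
        rw [← intervalIntegral.integral_add_adjacent_intervals i1 i2, ← hanti y t hy0 h.le]
        have e1 : ∫ s in y..t, (if s < t then y / s ^ 2 else 0) = ∫ s in y..t, y / s ^ 2 := by
          refine intervalIntegral.integral_congr_ae ?_
          have : ∀ᵐ s : ℝ, s ≠ t := by simp [MeasureTheory.ae_iff]
          filter_upwards [this] with s hs hs'
          rw [Set.uIoc_of_le h.le] at hs'
          rw [if_pos (lt_of_le_of_ne hs'.2 hs)]
        rw [e1]
        have : 0 ≤ ∫ s in t..U, (if s < t then y / s ^ 2 else 0) :=
          intervalIntegral.integral_nonneg htU fun s _ ↦ by split_ifs <;> positivity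
        linarith
      have h2 : t / p * (y / y - y / t) ≤ t / p * ∫ s in y..U, (if s < t then y / s ^ 2 else 0) :=
          by gcongr
      refine le_trans (le_of_eq ?_) h2
      rw [max_eq_left (by linarith)]
      have : 0 < t := hy0.trans h
      field_simp
  have hrhs : ∫ s in y..U, (y / s ^ 2) * (U - s + 2.45)
      = U - y - y * Real.log (U / y) + 2.45 * (1 - y / U) := by
    have : ∀ s ∈ Set.uIcc y U, HasDerivAt
        (fun s : ℝ ↦ - ((U + 2.45) * y / s) - y * Real.log s) ((y / s ^ 2) * (U - s + 2.45)) s := by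
      intro s hs
      rw [Set.uIcc_of_le hyX] at hs
      have hs0 : s ≠ 0 := (hy0.trans_le hs.1).ne'
      have := (((hasDerivAt_inv hs0).const_mul ((U + 2.45) * y)).neg).sub
        ((Real.hasDerivAt_log hs0).const_mul y)
      convert! this using 1
      field_simp
      ring
    rw [intervalIntegral.integral_eq_sub_of_hasDerivAt this]
    · rw [Real.log_div hU0.ne' hy0.ne']
      field_simp
      ring
    · exact (hcont.mul (by fun_prop)).intervalIntegrable
  rw [← hrhs]
  refine (sum_le_sum hpt).trans ?_
  rw [← intervalIntegral.integral_finsetSum fun p _ ↦ (hiInd _).const_mul _]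
  refine intervalIntegral.integral_mono_on hyX ?_ ?_ ?_
  · have := IntervalIntegrable.sum {p ∈ Ioc 0 X | Nat.Prime p}
      (f := fun (p : ℕ) (s : ℝ) ↦ Real.log p / p * (if s < Real.log p then y / s ^ 2 else 0))
      (μ := MeasureTheory.volume) (a := y) (b := U) fun p _ ↦ (hiInd _).const_mul _
    convert! this using 1
    ext s
    simp
  · exact (hcont.mul (by fun_prop)).intervalIntegrable
  · intro s hs
    have hs0 : 0 < s := hy0.trans_le hs.1
    have := sum_primes_log_div_le X hX s (hy.trans hs.1) hs.2
    rw [← filter_filter, sum_filter] at this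
    calc _ = (y / s ^ 2) * ∑ p ∈ Ioc 0 X with Nat.Prime p,
          (if s < Real.log p then Real.log p / p else 0) := by
          rw [mul_sum]
          refine sum_congr rfl fun p _ ↦ ?_
          split_ifs <;> ring
      _ ≤ _ := by gcongr

/-! ### The tent and its primitive -/

/-- The tent function `min w (2 - w)`, cut off at `0` for `w ≥ 2` (only `w ≥ 0` matters). It is
written as a combination of truncated lines because both the convolution square of an interval and
the primitive `rho` are then immediate. -/
noncomputable def hat (w : ℝ) : ℝ := max (2 - w) 0 - 2 * max (1 - w) 0

/-- The primitive of `-hat` that vanishes for `w ≥ 2`; it decreases from `1` at `w = 0`. -/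
noncomputable def rho (w : ℝ) : ℝ := (max (2 - w) 0 ^ 2 - 2 * max (1 - w) 0 ^ 2) / 2

lemma hat_nonneg {w : ℝ} (hw : 0 ≤ w) : 0 ≤ hat w := by
  unfold hat
  rcases le_total w 1 with h | h <;> rcases le_total w 2 with h' | h' <;>
    simp only [max_def] <;> split_ifs <;> linarith

lemma hat_eq_zero {w : ℝ} (hw : 2 ≤ w) : hat w = 0 := by
  unfold hat
  rw [max_eq_right (by linarith), max_eq_right (by linarith)]; ring

lemma hasDerivAt_max_sub_sq (c w : ℝ) :
    HasDerivAt (fun w : ℝ ↦ max (c - w) 0 ^ 2) (-2 * max (c - w) 0) w := by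
  rcases lt_trichotomy w c with h | h | h
  · have h1 : HasDerivAt (fun w : ℝ ↦ (c - w) ^ 2) (-2 * (c - w)) w := by
      have := ((hasDerivAt_id w).const_sub c).pow 2
      convert! this using 1
      simp
    rw [max_eq_left (by linarith)]
    refine h1.congr_of_eventuallyEq ?_
    filter_upwards [Iio_mem_nhds h] with v hv
    rw [max_eq_left (by linarith [Set.mem_Iio.1 hv])]
  · subst h
    simp only [sub_self, max_self, mul_zero]
    rw [hasDerivAt_iff_isLittleO]
    simp only [sub_self, max_self, smul_zero, sub_zero]
    have h0 : (fun v : ℝ ↦ (v - w) ^ 2) =o[nhds w] fun v ↦ v - w := by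
      have : Filter.Tendsto (fun v : ℝ ↦ v - w) (nhds w) (nhds 0) := by
        have : ContinuousAt (fun v : ℝ ↦ v - w) w := by fun_prop
        simpa [ContinuousAt] using this
      exact (Asymptotics.isLittleO_pow_id one_lt_two).comp_tendsto this
    refine Asymptotics.IsBigO.trans_isLittleO (Asymptotics.IsBigO.of_bound 1 ?_) h0
    refine Filter.Eventually.of_forall fun v ↦ ?_
    simp only [ne_eq, OfNat.ofNat_ne_zero, not_false_eq_true, zero_pow, sub_zero,
      Real.norm_eq_abs, one_mul]
    rw [abs_of_nonneg (by positivity), abs_of_nonneg (by positivity)]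
    rcases le_total (w - v) 0 with h | h
    · rw [max_eq_right h]; nlinarith [sq_nonneg (v - w)]
    · rw [max_eq_left h]; nlinarith
  · rw [max_eq_right (by linarith), mul_zero]
    refine (hasDerivAt_const w (0 : ℝ)).congr_of_eventuallyEq ?_
    filter_upwards [Ioi_mem_nhds h] with v hv
    rw [max_eq_right (by linarith [Set.mem_Ioi.1 hv])]; norm_num

lemma hasDerivAt_rho (w : ℝ) : HasDerivAt rho (-hat w) w := by
  have := ((hasDerivAt_max_sub_sq 2 w).sub ((hasDerivAt_max_sub_sq 1 w).const_mul 2)).div_const 2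
  unfold rho
  convert! this using 1
  unfold hat; ring

lemma rho_eq_zero {w : ℝ} (hw : 2 ≤ w) : rho w = 0 := by
  unfold rho
  rw [max_eq_right (by linarith), max_eq_right (by linarith)]; ring

lemma rho_zero : rho 0 = 1 := by
  unfold rho; norm_num

lemma rho_antitoneOn : AntitoneOn rho (Set.Ici 0) := by
  refine antitoneOn_of_deriv_nonpos (convex_Ici 0) ?_ ?_ ?_
  · exact fun w _ ↦ (hasDerivAt_rho w).continuousAt.continuousWithinAt
  · exact fun w _ ↦ (hasDerivAt_rho w).differentiableAt.differentiableWithinAt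
  · intro w hw
    rw [interior_Ici] at hw
    rw [(hasDerivAt_rho w).deriv]
    linarith [hat_nonneg (le_of_lt (Set.mem_Ioi.1 hw))]

lemma rho_nonneg {w : ℝ} (hw : 0 ≤ w) : 0 ≤ rho w := by
  rcases le_total w 2 with h | h
  · rw [← rho_eq_zero le_rfl]
    exact rho_antitoneOn hw (Set.mem_Ici.2 (by norm_num)) h
  · exact (rho_eq_zero h).ge

lemma rho_le_one {w : ℝ} (hw : 0 ≤ w) : rho w ≤ 1 := by
  rw [← rho_zero]
  exact rho_antitoneOn (Set.mem_Ici.2 le_rfl) hw hw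

lemma one_sub_rho_le {w : ℝ} (hw : 0 ≤ w) : 1 - rho w ≤ w := by
  rcases le_total w 1 with h | h
  · unfold rho
    rw [max_eq_left (by linarith), max_eq_left (by linarith)]
    nlinarith
  · linarith [rho_nonneg hw]

/-- The exact value, with the fractional-part correction: the comparisons with `y` below have no
room for an error term. -/
lemma sum_max_sub (L : ℕ) (z : ℝ) (hz : 0 ≤ z) (hL : z ≤ L) :
    ∑ n ∈ Ioc 0 L, max (z - n) 0 = (z ^ 2 - z + Int.fract z * (1 - Int.fract z)) / 2 := by
  set k := ⌊z⌋₊ with hk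
  have hkz : (k : ℝ) ≤ z := Nat.floor_le hz
  have hkz' : z < k + 1 := Nat.lt_floor_add_one z
  have hkL : k ≤ L := by
    have : (k : ℝ) ≤ L := hkz.trans hL
    exact_mod_cast this
  have hfr : Int.fract z = z - k := by
    rw [Int.fract, ← natCast_floor_eq_intCast_floor hz]
  rw [← sum_Ioc_consecutive _ (Nat.zero_le k) hkL]
  have h2 : ∑ n ∈ Ioc k L, max (z - n) 0 = 0 := by
    refine sum_eq_zero fun n hn ↦ max_eq_right ?_
    have : k + 1 ≤ n := (mem_Ioc.1 hn).1
    have : ((k + 1 : ℕ) : ℝ) ≤ n := by exact_mod_cast this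
    push_cast at this
    linarith
  have h1 : ∑ n ∈ Ioc 0 k, max (z - n) 0 = ∑ n ∈ Ioc 0 k, (z - n) := by
    refine sum_congr rfl fun n hn ↦ max_eq_left ?_
    have : (n : ℝ) ≤ k := by exact_mod_cast (mem_Ioc.1 hn).2
    linarith
  have h3 : ∀ j : ℕ, ∑ n ∈ Ioc 0 j, (z - (n : ℝ)) = j * z - j * (j + 1) / 2 := by
    intro j
    induction j with
    | zero => simp
    | succ j ih => rw [sum_Ioc_succ_top (Nat.zero_le j), ih]; push_cast; ring
  rw [h1, h2, h3, hfr]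
  ring

/-- Clearing denominators turns the tent at scale `y` into the second difference of
`max (· - n) 0`. -/
lemma hat_div (y : ℝ) (hy : 0 < y) (n : ℕ) :
    y * hat (n / y) = max (2 * y - n) 0 - 2 * max (y - n) 0 := by
  unfold hat
  rw [mul_sub, mul_left_comm, mul_max_of_nonneg _ _ hy.le, mul_max_of_nonneg _ _ hy.le]
  have h1 : y * (2 - n / y) = 2 * y - n := by field_simp
  have h2 : y * (1 - n / y) = y - n := by field_simp
  rw [h1, h2, mul_zero]

/-- The Riemann sum of the tent at spacing `1 / y` never exceeds `y` times its integral, which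
is `1`. -/
lemma sum_hat_le (L : ℕ) (y : ℝ) (hy : 0 < y) : ∑ n ∈ Ioc 0 L, hat (n / y) ≤ y := by
  obtain ⟨M, hM⟩ := exists_nat_ge (2 * y)
  have hmono : ∑ n ∈ Ioc 0 L, hat (n / y) ≤ ∑ n ∈ Ioc 0 (max L M), hat (n / y) := by
    refine sum_le_sum_of_subset_of_nonneg (Ioc_subset_Ioc_right (le_max_left _ _)) ?_
    exact fun n _ _ ↦ hat_nonneg (by positivity)
  refine hmono.trans ?_
  have hM' : 2 * y ≤ (max L M : ℕ) := hM.trans (by exact_mod_cast le_max_right _ _)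
  rw [← mul_le_mul_iff_right₀ hy, mul_sum]
  simp_rw [hat_div y hy]
  rw [sum_sub_distrib, ← mul_sum, sum_max_sub _ _ (by linarith) hM',
    sum_max_sub _ _ hy.le (by linarith)]
  have hf0 := Int.fract_nonneg y
  have hf1 := Int.fract_lt_one y
  rcases lt_or_ge (Int.fract y) (1 / 2) with h | h
  · have h2 : Int.fract (2 * y) = 2 * Int.fract y := by
      rw [Int.fract_eq_iff]
      exact ⟨by linarith, by linarith, 2 * ⌊y⌋, by rw [Int.fract]; push_cast; ring⟩
    rw [h2]
    nlinarith [sq_nonneg (Int.fract y)]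
  · have h2 : Int.fract (2 * y) = 2 * Int.fract y - 1 := by
      rw [Int.fract_eq_iff]
      exact ⟨by linarith, by linarith, 2 * ⌊y⌋ + 1, by rw [Int.fract]; push_cast; ring⟩
    rw [h2]
    nlinarith [sq_nonneg (1 - Int.fract y)]

lemma sum_hat_eq (L N : ℕ) (hN : 1 ≤ N) (hL : 2 * N ≤ L) :
    ∑ n ∈ Ioc 0 L, hat (n / (N : ℝ)) = N := by
  have hN0 : (0 : ℝ) < N := by exact_mod_cast hN
  have hL' : 2 * (N : ℝ) ≤ L := by exact_mod_cast hL
  have : (N : ℝ) * ∑ n ∈ Ioc 0 L, hat (n / (N : ℝ)) = N * N := by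
    rw [mul_sum]
    simp_rw [hat_div N hN0]
    rw [sum_sub_distrib, ← mul_sum, sum_max_sub _ _ (by linarith) hL',
      sum_max_sub _ _ hN0.le (by linarith)]
    have : Int.fract (2 * (N : ℝ)) = 0 := by
      have := Int.fract_natCast (R := ℝ) (2 * N)
      simpa using this
    rw [this, Int.fract_natCast]; ring
  exact mul_left_cancel₀ hN0.ne' this

/-- The smoothed logarithmic sum `∑ c n / n` over `n ≤ L`, with cutoff `rho (n / y)`. -/
noncomputable def smooth (c : ℕ → ℝ) (L : ℕ) (y : ℝ) : ℝ :=
  ∑ n ∈ Ioc 0 L, c n * (rho (n / y) / n)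

lemma hasDerivAt_smooth (c : ℕ → ℝ) (L : ℕ) (y : ℝ) (hy : 0 < y) :
    HasDerivAt (smooth c L) ((∑ n ∈ Ioc 0 L, c n * hat (n / y)) / y ^ 2) y := by
  unfold smooth
  rw [sum_div]
  refine HasDerivAt.fun_sum fun n hn ↦ ?_
  have hn0 : (n : ℝ) ≠ 0 := by
    have := (mem_Ioc.1 hn).1
    positivity
  have h1 : HasDerivAt (fun y : ℝ ↦ (n : ℝ) / y) (n * (-(y ^ 2)⁻¹)) y :=
    (hasDerivAt_inv hy.ne').const_mul (n : ℝ)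
  have h2 := (((hasDerivAt_rho (n / y)).comp y h1).div_const (n : ℝ)).const_mul (c n)
  convert! h2 using 1
  field_simp

lemma smooth_one_eq_zero (L : ℕ) (y : ℝ) (hy : 0 < y) (hy2 : y ≤ 1 / 2) :
    smooth (fun _ ↦ 1) L y = 0 := by
  refine sum_eq_zero fun n hn ↦ ?_
  have : (1 : ℝ) ≤ n := by exact_mod_cast (mem_Ioc.1 hn).1
  rw [rho_eq_zero, zero_div, mul_zero]
  rw [le_div_iff₀ hy]; linarith

lemma smooth_one_mono (L : ℕ) {y z : ℝ} (hy : 0 < y) (hyz : y ≤ z) :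
    smooth (fun _ ↦ 1) L y ≤ smooth (fun _ ↦ 1) L z := by
  refine sum_le_sum fun n _ ↦ ?_
  have : rho (n / y) ≤ rho (n / z) :=
    rho_antitoneOn (Set.mem_Ici.2 (by have := hy.trans_le hyz; positivity))
      (Set.mem_Ici.2 (by positivity)) (by gcongr)
  gcongr

lemma smooth_one_nonneg (L : ℕ) {y : ℝ} (hy : 0 < y) : 0 ≤ smooth (fun _ ↦ 1) L y :=
  sum_nonneg fun n _ ↦ by
    have := rho_nonneg (w := n / y) (by positivity)
    positivity

/-- The function `y ↦ smooth 1 L y` grows no faster than `log y`, because the tent sum in its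
derivative is at most `y`. -/
lemma smooth_one_sub_le (L : ℕ) {y z : ℝ} (hy : 0 < y) (hyz : y ≤ z) :
    smooth (fun _ ↦ 1) L z - smooth (fun _ ↦ 1) L y ≤ Real.log z - Real.log y := by
  have hd (v : ℝ) (hv : 0 < v) := (hasDerivAt_smooth (fun _ ↦ 1) L v hv).sub
    (Real.hasDerivAt_log hv.ne')
  have : AntitoneOn (fun v ↦ smooth (fun _ ↦ 1) L v - Real.log v) (Set.Ioi 0) := by
    refine antitoneOn_of_deriv_nonpos (convex_Ioi 0) ?_ ?_ ?_
    · exact fun v hv ↦ (hd v hv).continuousAt.continuousWithinAt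
    · intro v hv
      rw [interior_Ioi] at hv
      exact (hd v hv).differentiableAt.differentiableWithinAt
    · intro v hv
      rw [interior_Ioi] at hv
      have hv0 : 0 < v := hv
      have := (hd v hv).deriv
      simp only [Pi.sub_def] at this
      rw [this]
      have h1 := sum_hat_le L v hv
      rw [sub_nonpos, div_le_iff₀ (by positivity)]
      simp only [one_mul]
      calc _ ≤ v := h1
        _ = v⁻¹ * v ^ 2 := by field_simp
  have := this (Set.mem_Ioi.2 hy) (Set.mem_Ioi.2 (hy.trans_le hyz)) hyz
  simp only at this
  linarith

lemma smooth_one_le_max (L : ℕ) {y : ℝ} (hy : 0 < y) :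
    smooth (fun _ ↦ 1) L y ≤ max (Real.log (2 * y)) 0 := by
  rcases le_total y (1 / 2) with h | h
  · rw [smooth_one_eq_zero L y hy h]; exact le_max_right _ _
  · have h1 := smooth_one_sub_le L (by norm_num : (0 : ℝ) < 1 / 2) h
    rw [smooth_one_eq_zero L _ (by norm_num) le_rfl, sub_zero] at h1
    refine le_max_of_le_left (h1.trans_eq ?_)
    rw [← Real.log_div hy.ne' (by norm_num)]
    congr 1; ring

/-! ### Sieve inequalities for the defect -/

lemma prod_mem_Icc {ι : Type*} [DecidableEq ι] (B : Finset ι) (u : ι → ℝ)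
    (hu : ∀ i, -1 ≤ u i ∧ u i ≤ 1) : -1 ≤ ∏ i ∈ B, u i ∧ ∏ i ∈ B, u i ≤ 1 := by
  rw [← abs_le, abs_prod]
  exact prod_le_one (fun _ _ ↦ abs_nonneg _) fun i _ ↦ abs_le.2 (hu i)

/-- The first Bonferroni inequality, for numbers in `[-1, 1]`. -/
lemma one_sub_prod_le_sum {ι : Type*} [DecidableEq ι] (B : Finset ι) (u : ι → ℝ)
    (hu : ∀ i, -1 ≤ u i ∧ u i ≤ 1) : 1 - ∏ i ∈ B, u i ≤ ∑ i ∈ B, (1 - u i) := by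
  induction B using Finset.induction_on with
  | empty => simp
  | insert i B hi ih =>
    rw [prod_insert hi, sum_insert hi]
    have h1 := prod_mem_Icc B u hu
    have h2 := hu i
    nlinarith [mul_nonneg (sub_nonneg.2 h2.2) (sub_nonneg.2 h1.2)]

/-- The second Bonferroni inequality, for numbers in `[-1, 1]`; each unordered pair occurs twice in
the double sum, whence the factor `1 / 2`. -/
lemma sum_sub_pairs_le_one_sub_prod {ι : Type*} [DecidableEq ι] (B : Finset ι) (u : ι → ℝ)
    (hu : ∀ i, -1 ≤ u i ∧ u i ≤ 1) :
    ∑ i ∈ B, (1 - u i) - 1 / 2 * ∑ i ∈ B, ∑ j ∈ B.erase i, (1 - u i) * (1 - u j)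
      ≤ 1 - ∏ i ∈ B, u i := by
  have key : ∑ i ∈ B, (1 - u i)
      - 1 / 2 * ((∑ i ∈ B, (1 - u i)) ^ 2 - ∑ i ∈ B, (1 - u i) ^ 2) ≤ 1 - ∏ i ∈ B, u i := by
    induction B using Finset.induction_on with
    | empty => simp
    | insert i B hi ih =>
      rw [prod_insert hi, sum_insert hi, sum_insert hi]
      have h1 := one_sub_prod_le_sum B u hu
      have h2 := hu i
      nlinarith [mul_nonneg (sub_nonneg.2 h2.2) (sub_nonneg.2 h1)]
  refine le_trans (le_of_eq ?_) key
  have : ∑ i ∈ B, ∑ j ∈ B.erase i, (1 - u i) * (1 - u j)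
      = (∑ i ∈ B, (1 - u i)) ^ 2 - ∑ i ∈ B, (1 - u i) ^ 2 := by
    rw [sq (∑ i ∈ B, (1 - u i)), sum_mul_sum, ← sum_sub_distrib]
    refine sum_congr rfl fun i hi ↦ ?_
    rw [← sum_erase_add B _ hi]
    ring
  rw [this]

lemma sum_ite_dvd (L d : ℕ) (hd : 0 < d) (F : ℕ → ℝ) (hF : ∀ n, L < n → F n = 0) :
    ∑ n ∈ Ioc 0 L, (if d ∣ n then F n else 0) = ∑ m ∈ Ioc 0 L, F (d * m) := by
  have h1 : ∑ m ∈ Ioc 0 L, F (d * m) = ∑ m ∈ Ioc 0 (L / d), F (d * m) := by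
    symm
    refine sum_subset (Ioc_subset_Ioc_right (Nat.div_le_self L d)) fun m _ hm' ↦ hF _ ?_
    have hm2 : ¬ (0 < m ∧ m ≤ L / d) := by simpa using hm'
    have hm3 : 0 < m := by simp_all
    have : L / d < m := by by_contra h; exact hm2 ⟨hm3, not_lt.1 h⟩
    rw [Nat.div_lt_iff_lt_mul hd] at this
    linarith [mul_comm d m]
  rw [h1, ← sum_filter]
  symm
  refine sum_bij (fun m _ ↦ d * m) ?_ ?_ ?_ ?_
  · intro m hm
    rw [mem_Ioc, Nat.le_div_iff_mul_le hd] at hm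
    rw [mem_filter, mem_Ioc]
    exact ⟨⟨Nat.mul_pos hd hm.1, by linarith [mul_comm d m, hm.2]⟩, dvd_mul_right _ _⟩
  · intro a _ b _ h
    exact Nat.eq_of_mul_eq_mul_left hd h
  · intro n hn
    rw [mem_filter, mem_Ioc] at hn
    obtain ⟨⟨h0, hnL⟩, m, rfl⟩ := hn
    refine ⟨m, ?_, rfl⟩
    rw [mem_Ioc, Nat.le_div_iff_mul_le hd]
    exact ⟨Nat.pos_of_mul_pos_left h0, by linarith [mul_comm d m]⟩
  · intro m _
    rfl

/-- The primes up to `L`. -/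
def primesUpTo (L : ℕ) : Finset ℕ := {p ∈ Ioc 0 L | Nat.Prime p}

lemma mem_primesUpTo {L p : ℕ} : p ∈ primesUpTo L ↔ Nat.Prime p ∧ p ≤ L := by
  unfold primesUpTo
  rw [mem_filter, mem_Ioc]
  exact ⟨fun h ↦ ⟨h.2, h.1.2⟩, fun h ↦ ⟨⟨h.1.pos, h.2⟩, h.1⟩⟩

section Local

variable (x : ℕ →* ℝ)

lemma eq_prod_primesUpTo (L n : ℕ) (hn : 0 < n) (hnL : n ≤ L) :
    x n = ∏ p ∈ primesUpTo L, x p ^ n.factorization p := by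
  conv_lhs => rw [← Nat.prod_factorization_pow_eq_self hn.ne']
  rw [map_finsuppProd, Finsupp.prod]
  simp only [map_pow]
  refine prod_subset ?_ ?_
  · intro p hp
    rw [Nat.support_factorization, Nat.mem_primeFactors] at hp
    exact mem_primesUpTo.2 ⟨hp.1, (Nat.le_of_dvd hn hp.2.1).trans hnL⟩
  · intro p _ hp
    rw [Finsupp.notMem_support_iff.1 hp, pow_zero]

variable (hx : ∀ n, x n = -1 ∨ x n = 0 ∨ x n = 1)
include hx

lemma val_bounds (n : ℕ) : -1 ≤ x n ∧ x n ≤ 1 := by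
  rcases hx n with h | h | h <;> rw [h] <;> norm_num

lemma pow_bounds (n k : ℕ) : -1 ≤ x n ^ k ∧ x n ^ k ≤ 1 := by
  rw [← map_pow]; exact val_bounds x hx _

/-- The defect of `x` at the prime powers of `p` is supported on multiples of `p`. -/
lemma local_le (p n : ℕ) :
    1 - x p ^ n.factorization p ≤ (1 - x p) * (if p ∣ n then 1 else 0) := by
  by_cases h : p ∣ n
  · rw [if_pos h, mul_one]
    rcases Nat.eq_zero_or_pos (n.factorization p) with h0 | h0
    · rw [h0]; linarith [(val_bounds x hx p).2]
    · rcases hx p with h1 | h1 | h1 <;> rw [h1]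
      · rcases neg_one_pow_eq_or ℝ (n.factorization p) with h2 | h2 <;> norm_num [h2]
      · rw [zero_pow h0.ne']
      · rw [one_pow]
  · rw [Nat.factorization_eq_zero_of_not_dvd h]; simp [h]

/-- The converse bound up to multiples of `p ^ 2`; the correction is needed only for `x p = -1`,
when even powers of `p` have no defect. -/
lemma le_local (p n : ℕ) (hp : p.Prime) (hn : n ≠ 0) :
    (1 - x p) * (if p ∣ n then 1 else 0) - (1 - x p) * (-x p) * (if p ^ 2 ∣ n then 1 else 0)
      ≤ 1 - x p ^ n.factorization p := by
  by_cases h : p ∣ n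
  · rw [if_pos h, mul_one]
    have h0 : 1 ≤ n.factorization p := (hp.dvd_iff_one_le_factorization hn).1 h
    rcases hx p with h1 | h1 | h1 <;> rw [h1]
    · by_cases h2 : p ^ 2 ∣ n
      · rw [if_pos h2]
        rcases neg_one_pow_eq_or ℝ (n.factorization p) with h3 | h3 <;> rw [h3] <;> norm_num
      · have h3 : n.factorization p < 2 := by
          by_contra h4
          exact h2 ((hp.pow_dvd_iff_le_factorization hn).2 (not_lt.1 h4))
        have h4 : n.factorization p = 1 := by omega
        rw [h4, if_neg h2]; norm_num
    · rw [zero_pow (by omega)]; norm_num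
    · rw [one_pow]; norm_num
  · have h2 : ¬ p ^ 2 ∣ n := fun h2 ↦ h ((dvd_pow_self p two_ne_zero).trans h2)
    rw [if_neg h, if_neg h2]
    have := (pow_bounds x hx p (n.factorization p)).2
    linarith

/-- If `x` barely correlates with the tent, then the primes with `x p ≠ 1` carry mass at least
almost `1`: `1 - x n ≤ ∑_{p ∣ n} (1 - x p)`, summed against the tent. -/
lemma prime_defect (N : ℕ) (hN : 1 ≤ N) (S : ℝ)
    (hS : ∑ n ∈ Ioc 0 (2 * N), x n * hat (n / (N : ℝ)) ≤ S) :
    1 - S / N ≤ ∑ p ∈ primesUpTo (2 * N), (1 - x p) / p := by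
  have hN0 : (0 : ℝ) < N := by exact_mod_cast hN
  have h1 : N - S ≤ ∑ n ∈ Ioc 0 (2 * N), (1 - x n) * hat (n / (N : ℝ)) := by
    have := sum_hat_eq (2 * N) N hN le_rfl
    simp_rw [sub_mul, one_mul]
    rw [sum_sub_distrib, this]
    linarith
  have h2 : ∑ n ∈ Ioc 0 (2 * N), (1 - x n) * hat (n / (N : ℝ))
      ≤ ∑ n ∈ Ioc 0 (2 * N), ∑ p ∈ primesUpTo (2 * N),
          (1 - x p) * (if p ∣ n then hat (n / (N : ℝ)) else 0) := by
    refine sum_le_sum fun n hn ↦ ?_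
    have hn' := mem_Ioc.1 hn
    have h3 := one_sub_prod_le_sum (primesUpTo (2 * N)) (fun p ↦ x p ^ n.factorization p)
      fun p ↦ pow_bounds x hx p _
    rw [← eq_prod_primesUpTo x (2 * N) n hn'.1 hn'.2] at h3
    have h4 : 1 - x n ≤ ∑ p ∈ primesUpTo (2 * N), (1 - x p) * (if p ∣ n then 1 else 0) :=
      h3.trans (sum_le_sum fun p _ ↦ local_le x hx p n)
    have h5 : 0 ≤ hat (n / (N : ℝ)) := hat_nonneg (by positivity)
    refine (mul_le_mul_of_nonneg_right h4 h5).trans_eq ?_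
    rw [sum_mul]
    refine sum_congr rfl fun p _ ↦ ?_
    split_ifs <;> ring
  rw [sum_comm] at h2
  have h3 : ∀ p ∈ primesUpTo (2 * N), ∑ n ∈ Ioc 0 (2 * N),
      (1 - x p) * (if p ∣ n then hat (n / (N : ℝ)) else 0) ≤ (1 - x p) / p * N := by
    intro p hp
    have hp0 := (mem_primesUpTo.1 hp).1.pos
    have hp1 : (0 : ℝ) < p := by exact_mod_cast hp0
    rw [← mul_sum, sum_ite_dvd _ _ hp0 (fun n ↦ hat (n / (N : ℝ)))]
    · have h4 := sum_hat_le (2 * N) (N / p) (by positivity)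
      have h5 : ∑ m ∈ Ioc 0 (2 * N), hat (((p * m : ℕ) : ℝ) / N)
          = ∑ m ∈ Ioc 0 (2 * N), hat (m / ((N : ℝ) / p)) := by
        refine sum_congr rfl fun m _ ↦ ?_
        congr 1; push_cast; field_simp
      rw [h5]
      have h6 : 0 ≤ 1 - x p := by linarith [(val_bounds x hx p).2]
      calc _ ≤ (1 - x p) * (N / p) := by gcongr
        _ = _ := by ring
    · intro n hn
      refine hat_eq_zero ?_
      rw [le_div_iff₀ hN0]
      exact_mod_cast hn.le
  have h4 := h1.trans (h2.trans (sum_le_sum h3))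
  rw [← sum_mul] at h4
  rw [← mul_le_mul_iff_left₀ hN0, sub_mul, div_mul_cancel₀ _ hN0.ne', one_mul]
  exact h4

omit hx in
/-- The multiples of `d` see the smoothed sum at scale `N / d`. -/
lemma sum_dvd_kernel (N d : ℕ) (hN : 1 ≤ N) (hd : 0 < d) :
    ∑ n ∈ Ioc 0 (2 * N), (if d ∣ n then rho (n / (N : ℝ)) / n else 0)
      = smooth (fun _ ↦ 1) (2 * N) (N / d) / d := by
  have hN0 : (0 : ℝ) < N := by exact_mod_cast hN
  have hd0 : (0 : ℝ) < d := by exact_mod_cast hd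
  rw [sum_ite_dvd _ _ hd (fun n ↦ rho (n / (N : ℝ)) / n)]
  · unfold smooth
    rw [sum_div]
    refine sum_congr rfl fun m hm ↦ ?_
    have : (m : ℝ) ≠ 0 := by have := (mem_Ioc.1 hm).1; positivity
    have h1 : ((d * m : ℕ) : ℝ) / N = m / ((N : ℝ) / d) := by push_cast; field_simp
    rw [h1]; push_cast; field_simp
  · intro n hn
    rw [rho_eq_zero, zero_div]
    rw [le_div_iff₀ hN0]
    exact_mod_cast hn.le

/-- The cofactor of `x` away from the primes in `B`, on integers `n ≤ L`. -/
noncomputable def cofactor (x : ℕ →* ℝ) (L : ℕ) (B : Finset ℕ) (n : ℕ) : ℝ :=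
  ∏ p ∈ primesUpTo L \ B, x p ^ n.factorization p

omit hx in
lemma cofactor_mul (L : ℕ) (B : Finset ℕ) (p m : ℕ) (hpB : p ∈ B) (hp : p.Prime) (hm : m ≠ 0) :
    cofactor x L B (p * m) = cofactor x L B m := by
  refine prod_congr rfl fun r hr ↦ ?_
  rw [mem_sdiff] at hr
  have hrp : r ≠ p := fun h ↦ hr.2 (h ▸ hpB)
  rw [Nat.factorization_mul hp.ne_zero hm, Finsupp.add_apply,
    Nat.factorization_eq_zero_of_not_dvd
      (fun h ↦ hrp ((Nat.prime_dvd_prime_iff_eq (mem_primesUpTo.1 hr.1).1 hp).1 h)), zero_add]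

/-- Factor `x` into its part at the primes in `B` and its cofactor. The cofactor contributes
nonnegatively to the defect because the truncated sieve weight
`1 - ∑ p ∈ B, (1 - x p ^ n.factorization p)` has nonnegative mean against it when the total mass of
`B` is at most `1`. What remains is the second Bonferroni inequality for the part at `B`. -/
lemma defect_ge_pairs (N : ℕ) (hN : 1 ≤ N) (B : Finset ℕ) (hB : B ⊆ primesUpTo (2 * N))
    (hQ : ∑ p ∈ B, (1 - x p) / p ≤ 1) :
    ∑ n ∈ Ioc 0 (2 * N), (∑ p ∈ B, (1 - x p ^ n.factorization p)
        - 1 / 2 * ∑ p ∈ B, ∑ r ∈ B.erase p,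
          (1 - x p ^ n.factorization p) * (1 - x r ^ n.factorization r)) * (rho (n / (N : ℝ)) / n)
      ≤ ∑ n ∈ Ioc 0 (2 * N), (1 - x n) * (rho (n / (N : ℝ)) / n) := by
  have hN0 : (0 : ℝ) < N := by exact_mod_cast hN
  set K : ℕ → ℝ := fun n ↦ rho (n / (N : ℝ)) / n with hK
  have hK0 (n : ℕ) : 0 ≤ K n := by
    have := rho_nonneg (w := n / (N : ℝ)) (by positivity)
    simp only [hK]; positivity
  have hKbig (n : ℕ) (hn : 2 * N < n) : K n = 0 := by
    simp only [hK]
    rw [rho_eq_zero, zero_div]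
    rw [le_div_iff₀ hN0]
    exact_mod_cast hn.le
  set a : ℕ → ℝ := fun n ↦ 1 - cofactor x (2 * N) B n with ha
  have ha0 (n : ℕ) : 0 ≤ a n := by
    have := prod_mem_Icc (primesUpTo (2 * N) \ B) (fun p ↦ x p ^ n.factorization p)
      fun p ↦ pow_bounds x hx p _
    simp only [ha, cofactor]; linarith [this.2]
  have hpoint : ∀ n ∈ Ioc 0 (2 * N), (∑ p ∈ B, (1 - x p ^ n.factorization p)
        - 1 / 2 * ∑ p ∈ B, ∑ r ∈ B.erase p,
          (1 - x p ^ n.factorization p) * (1 - x r ^ n.factorization r)) * K n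
        + (1 - ∑ p ∈ B, (1 - x p ^ n.factorization p)) * (a n * K n) ≤ (1 - x n) * K n := by
    intro n hn
    have hn' := mem_Ioc.1 hn
    have h1 := one_sub_prod_le_sum B (fun p ↦ x p ^ n.factorization p)
      fun p ↦ pow_bounds x hx p _
    have h2 := sum_sub_pairs_le_one_sub_prod B (fun p ↦ x p ^ n.factorization p)
      fun p ↦ pow_bounds x hx p _
    have h3 : x n = (1 - a n) * ∏ p ∈ B, x p ^ n.factorization p := by
      rw [eq_prod_primesUpTo x (2 * N) n hn'.1 hn'.2, ← prod_sdiff hB]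
      simp only [ha, cofactor, sub_sub_cancel]
    rw [h3, ← mul_assoc, ← add_mul]
    refine mul_le_mul_of_nonneg_right ?_ (hK0 n)
    have := mul_le_mul_of_nonneg_right h1 (ha0 n)
    nlinarith
  refine le_trans ?_ (sum_le_sum hpoint)
  rw [sum_add_distrib, le_add_iff_nonneg_right]
  have h4 : ∀ p ∈ B, ∑ n ∈ Ioc 0 (2 * N), (1 - x p ^ n.factorization p) * (a n * K n)
      ≤ (1 - x p) / p * ∑ n ∈ Ioc 0 (2 * N), a n * K n := by
    intro p hp
    have hpp := (mem_primesUpTo.1 (hB hp)).1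
    have hp0 : (1 : ℝ) ≤ p := by exact_mod_cast hpp.one_le
    have hp1 : (0 : ℝ) < p := by linarith
    have hap : 0 ≤ 1 - x p := by linarith [(val_bounds x hx p).2]
    calc _ ≤ ∑ n ∈ Ioc 0 (2 * N), (1 - x p) * (if p ∣ n then a n * K n else 0) := by
          refine sum_le_sum fun n _ ↦ ?_
          have := mul_le_mul_of_nonneg_right (local_le x hx p n)
            (mul_nonneg (ha0 n) (hK0 n))
          refine this.trans_eq ?_
          split_ifs <;> ring
      _ = (1 - x p) * ∑ m ∈ Ioc 0 (2 * N), a (p * m) * K (p * m) := by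
          rw [← mul_sum, sum_ite_dvd _ _ hpp.pos (fun n ↦ a n * K n)]
          intro n hn
          rw [hKbig n hn, mul_zero]
      _ ≤ (1 - x p) * ∑ m ∈ Ioc 0 (2 * N), a m * K m / p := by
          gcongr with m hm
          have hm0 := (mem_Ioc.1 hm).1
          have hm1 : (0 : ℝ) < m := by exact_mod_cast hm0
          have e1 : a (p * m) = a m := by
            simp only [ha]; rw [cofactor_mul x _ _ _ _ hp hpp hm0.ne']
          rw [e1, mul_div_assoc]
          refine mul_le_mul_of_nonneg_left ?_ (ha0 m)
          have e2 : rho (((p * m : ℕ) : ℝ) / N) ≤ rho (m / N) := by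
            refine rho_antitoneOn (Set.mem_Ici.2 (by positivity)) (Set.mem_Ici.2 (by positivity)) ?_
            push_cast
            gcongr
            nlinarith
          simp only [hK]
          rw [div_div, mul_comm (m : ℝ)]
          push_cast at e2 ⊢
          gcongr
      _ = _ := by rw [← sum_div]; ring
  have h5 : ∑ n ∈ Ioc 0 (2 * N), (1 - ∑ p ∈ B, (1 - x p ^ n.factorization p)) * (a n * K n)
      = ∑ n ∈ Ioc 0 (2 * N), a n * K n
        - ∑ p ∈ B, ∑ n ∈ Ioc 0 (2 * N), (1 - x p ^ n.factorization p) * (a n * K n) := by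
    rw [sum_comm, ← sum_sub_distrib]
    refine sum_congr rfl fun n _ ↦ ?_
    rw [sub_mul, one_mul, sum_mul]
  rw [h5]
  have h6 := sum_le_sum h4
  rw [← sum_mul] at h6
  have h7 : 0 ≤ ∑ n ∈ Ioc 0 (2 * N), a n * K n :=
    sum_nonneg fun n _ ↦ mul_nonneg (ha0 n) (hK0 n)
  have h8 := mul_le_mul_of_nonneg_right hQ h7
  linarith

/-- The defect bound with single terms evaluated through `smooth 1`, and pair terms through
`(U - log p - log r)⁺ ≤ (U / 2 - log p)⁺ + (U / 2 - log r)⁺`, where `U = log (2N)`. -/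
lemma defect_ge (N : ℕ) (hN : 1 ≤ N) (B : Finset ℕ) (hB : B ⊆ primesUpTo (2 * N))
    (hQ : ∑ p ∈ B, (1 - x p) / p ≤ 1) :
    ∑ p ∈ B, (1 - x p) / p * ((1 - (-x p) / p) * smooth (fun _ ↦ 1) (2 * N) (N / p)
        - (1 - (1 - x p) / p) * max (Real.log (2 * N) / 2 - Real.log p) 0)
      ≤ ∑ n ∈ Ioc 0 (2 * N), (1 - x n) * (rho (n / (N : ℝ)) / n) := by
  have hN0 : (0 : ℝ) < N := by exact_mod_cast hN
  refine le_trans ?_ (defect_ge_pairs x hx N hN B hB hQ)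
  set U := Real.log (2 * N) with hU
  set K : ℕ → ℝ := fun n ↦ rho (n / (N : ℝ)) / n with hK
  have hK0 (n : ℕ) : 0 ≤ K n := by
    have := rho_nonneg (w := n / (N : ℝ)) (by positivity)
    simp only [hK]; positivity
  have ha0 (p : ℕ) : 0 ≤ 1 - x p := by linarith [(val_bounds x hx p).2]
  have hc0 (p : ℕ) : 0 ≤ (1 - x p) / p := div_nonneg (ha0 p) (by positivity)
  have hsingle : ∀ p ∈ B, (1 - x p) / p * ((1 - (-x p) / p) * smooth (fun _ ↦ 1) (2 * N) (N / p))
      ≤ ∑ n ∈ Ioc 0 (2 * N), (1 - x p ^ n.factorization p) * K n := by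
    intro p hp
    have hpp := (mem_primesUpTo.1 (hB hp)).1
    have hp0 : (1 : ℝ) ≤ p := by exact_mod_cast hpp.one_le
    have hp1 : (0 : ℝ) < p := by linarith
    have h1 : ∑ n ∈ Ioc 0 (2 * N), ((1 - x p) * (if p ∣ n then K n else 0)
        - (1 - x p) * (-x p) * (if p ^ 2 ∣ n then K n else 0))
        ≤ ∑ n ∈ Ioc 0 (2 * N), (1 - x p ^ n.factorization p) * K n := by
      refine sum_le_sum fun n hn ↦ ?_
      have := mul_le_mul_of_nonneg_right (le_local x hx p n hpp (mem_Ioc.1 hn).1.ne') (hK0 n)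
      refine le_trans (le_of_eq ?_) this
      split_ifs <;> ring
    rw [sum_sub_distrib, ← mul_sum, ← mul_sum, sum_dvd_kernel N p hN hpp.pos,
      sum_dvd_kernel N (p ^ 2) hN (pow_pos hpp.pos 2)] at h1
    refine le_trans ?_ h1
    have h2 : smooth (fun _ ↦ 1) (2 * N) (N / (p ^ 2 : ℕ))
        ≤ smooth (fun _ ↦ 1) (2 * N) (N / p) := by
      refine smooth_one_mono _ (by push_cast; positivity) ?_
      push_cast
      gcongr
      nlinarith
    have h3 : 0 ≤ (1 - x p) * (-x p) := by
      rcases hx p with h | h | h <;> rw [h] <;> norm_num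
    have h4 : (1 - x p) * (-x p) * (smooth (fun _ ↦ 1) (2 * N) (N / (p ^ 2 : ℕ)) / (p ^ 2 : ℕ))
        ≤ (1 - x p) * (-x p) * (smooth (fun _ ↦ 1) (2 * N) (N / p) / (p ^ 2 : ℕ)) := by gcongr
    refine le_trans (le_of_eq ?_) (sub_le_sub_left h4 _)
    push_cast
    field_simp
  have hpair : ∀ p ∈ B, ∀ r ∈ B.erase p, ∑ n ∈ Ioc 0 (2 * N),
      (1 - x p ^ n.factorization p) * (1 - x r ^ n.factorization r) * K n
      ≤ (1 - x p) / p * ((1 - x r) / r) *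
        (max (U / 2 - Real.log p) 0 + max (U / 2 - Real.log r) 0) := by
    intro p hp r hr
    obtain ⟨hrp, hr⟩ := mem_erase.1 hr
    have hpp := (mem_primesUpTo.1 (hB hp)).1
    have hrr := (mem_primesUpTo.1 (hB hr)).1
    have hp1 : (0 : ℝ) < p := by exact_mod_cast hpp.pos
    have hr1 : (0 : ℝ) < r := by exact_mod_cast hrr.pos
    have hcop : Nat.Coprime p r := (Nat.coprime_primes hpp hrr).2 hrp.symm
    have h1 : ∑ n ∈ Ioc 0 (2 * N),
        (1 - x p ^ n.factorization p) * (1 - x r ^ n.factorization r) * K n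
        ≤ ∑ n ∈ Ioc 0 (2 * N), (1 - x p) * (1 - x r) * (if p * r ∣ n then K n else 0) := by
      refine sum_le_sum fun n _ ↦ ?_
      have e1 := local_le x hx p n
      have e2 := local_le x hx r n
      have e3 : 0 ≤ 1 - x r ^ n.factorization r := by
        linarith [(pow_bounds x hx r (n.factorization r)).2]
      have e4 : 0 ≤ (1 - x p) * (if p ∣ n then (1 : ℝ) else 0) :=
        mul_nonneg (ha0 p) (by split_ifs <;> norm_num)
      have e5 := mul_le_mul_of_nonneg_right (mul_le_mul e1 e2 e3 e4) (hK0 n)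
      refine e5.trans_eq ?_
      by_cases d1 : p ∣ n
      · by_cases d2 : r ∣ n
        · rw [if_pos d1, if_pos d2, if_pos (hcop.mul_dvd_of_dvd_of_dvd d1 d2)]; ring
        · rw [if_neg d2, if_neg (fun h ↦ d2 ((dvd_mul_left _ _).trans h))]; ring
      · rw [if_neg d1, if_neg (fun h ↦ d1 ((dvd_mul_right _ _).trans h))]; ring
    rw [← mul_sum, sum_dvd_kernel N (p * r) hN (Nat.mul_pos hpp.pos hrr.pos)] at h1
    refine h1.trans ?_
    have h2 := smooth_one_le_max (2 * N) (y := N / (p * r : ℕ)) (by push_cast; positivity)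
    have h3 : Real.log (2 * (N / (p * r : ℕ))) = U - Real.log p - Real.log r := by
      rw [hU]
      push_cast
      rw [← mul_div_assoc, Real.log_div (by positivity) (by positivity),
        Real.log_mul hp1.ne' hr1.ne']
      ring
    rw [h3] at h2
    have h4 : max (U - Real.log p - Real.log r) 0
        ≤ max (U / 2 - Real.log p) 0 + max (U / 2 - Real.log r) 0 := by
      refine max_le ?_ (by positivity)
      have := le_max_left (U / 2 - Real.log p) 0
      have := le_max_left (U / 2 - Real.log r) 0
      linarith
    calc _ = (1 - x p) / p * ((1 - x r) / r) * smooth (fun _ ↦ 1) (2 * N) (N / (p * r : ℕ)) := by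
          push_cast; field_simp
      _ ≤ _ := by
          refine mul_le_mul_of_nonneg_left (h2.trans h4) (mul_nonneg (hc0 p) (hc0 r))
  set c : ℕ → ℝ := fun p ↦ (1 - x p) / p with hc
  set M : ℕ → ℝ := fun p ↦ max (U / 2 - Real.log p) 0 with hM
  have hpairs : ∑ p ∈ B, ∑ r ∈ B.erase p, c p * c r * (M p + M r)
      ≤ 2 * ∑ p ∈ B, c p * ((1 - c p) * M p) := by
    have e1 : ∑ p ∈ B, ∑ r ∈ B.erase p, c p * c r * (M p + M r)
        = 2 * ∑ p ∈ B, c p * M p * (∑ r ∈ B, c r - c p) := by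
      have e2 : ∀ p ∈ B, ∑ r ∈ B.erase p, c p * c r * (M p + M r)
          = ∑ r ∈ B, c p * c r * (M p + M r) - 2 * (c p * M p * c p) := by
        intro p hp
        rw [← sum_erase_add B _ hp]; ring
      rw [sum_congr rfl e2, sum_sub_distrib]
      have e3 : ∑ p ∈ B, ∑ r ∈ B, c p * c r * (M p + M r)
          = 2 * ∑ p ∈ B, c p * M p * ∑ r ∈ B, c r := by
        have : ∑ p ∈ B, ∑ r ∈ B, c p * c r * (M p + M r)
            = ∑ p ∈ B, ∑ r ∈ B, c p * M p * c r + ∑ p ∈ B, ∑ r ∈ B, c r * M r * c p := by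
          rw [← sum_add_distrib]
          refine sum_congr rfl fun p _ ↦ ?_
          rw [← sum_add_distrib]
          exact sum_congr rfl fun r _ ↦ by ring
        rw [this, sum_comm (f := fun p r ↦ c r * M r * c p), ← two_mul]
        simp_rw [mul_sum]
      rw [e3, ← mul_sum, ← mul_sub, ← sum_sub_distrib]
      congr 1
      exact sum_congr rfl fun p _ ↦ by ring
    rw [e1]
    gcongr 2 * ?_
    refine sum_le_sum fun p _ ↦ ?_
    rw [mul_assoc, mul_comm (M p)]
    have hMp : 0 ≤ M p := le_max_right _ _
    have hcp : 0 ≤ c p := hc0 p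
    gcongr
  have hexp : ∑ n ∈ Ioc 0 (2 * N), (∑ p ∈ B, (1 - x p ^ n.factorization p)
        - 1 / 2 * ∑ p ∈ B, ∑ r ∈ B.erase p,
          (1 - x p ^ n.factorization p) * (1 - x r ^ n.factorization r)) * K n
      = ∑ p ∈ B, ∑ n ∈ Ioc 0 (2 * N), (1 - x p ^ n.factorization p) * K n
        - 1 / 2 * ∑ p ∈ B, ∑ r ∈ B.erase p, ∑ n ∈ Ioc 0 (2 * N),
          (1 - x p ^ n.factorization p) * (1 - x r ^ n.factorization r) * K n := by
    have e1 : ∑ p ∈ B, ∑ r ∈ B.erase p, ∑ n ∈ Ioc 0 (2 * N),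
          (1 - x p ^ n.factorization p) * (1 - x r ^ n.factorization r) * K n
        = ∑ n ∈ Ioc 0 (2 * N), ∑ p ∈ B, ∑ r ∈ B.erase p,
          (1 - x p ^ n.factorization p) * (1 - x r ^ n.factorization r) * K n := by
      rw [sum_comm (s := Ioc 0 (2 * N))]
      exact sum_congr rfl fun p _ ↦ sum_comm
    rw [e1, sum_comm, mul_sum, ← sum_sub_distrib]
    refine sum_congr rfl fun n _ ↦ ?_
    rw [sub_mul, sum_mul, mul_assoc, sum_mul]
    simp_rw [sum_mul]
  rw [hexp]
  have h1 := sum_le_sum hsingle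
  have h2 : ∑ p ∈ B, ∑ r ∈ B.erase p, ∑ n ∈ Ioc 0 (2 * N),
          (1 - x p ^ n.factorization p) * (1 - x r ^ n.factorization r) * K n
      ≤ ∑ p ∈ B, ∑ r ∈ B.erase p, c p * c r * (M p + M r) :=
    sum_le_sum fun p hp ↦ sum_le_sum fun r hr ↦ hpair p hp r hr
  have h3 : ∑ p ∈ B, c p * ((1 - (-x p) / p) * smooth (fun _ ↦ 1) (2 * N) (N / p)
        - (1 - c p) * M p)
      = ∑ p ∈ B, c p * ((1 - (-x p) / p) * smooth (fun _ ↦ 1) (2 * N) (N / p))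
        - ∑ p ∈ B, c p * ((1 - c p) * M p) := by
    rw [← sum_sub_distrib]
    exact sum_congr rfl fun p _ ↦ mul_sub _ _ _
  refine h3.trans_le ?_
  linarith

end Local

/-! ### Bounding the smoothed sum -/

/-- A set `B` between `P₀` and `P` whose `c`-mass is the largest possible one not exceeding `1`. No
element of positive mass can be added to it. -/
lemma exists_maximal_subset (P P₀ : Finset ℕ) (hP₀ : P₀ ⊆ P) (c : ℕ → ℝ)
    (hsum : ∑ p ∈ P₀, c p ≤ 1) :
    ∃ B, P₀ ⊆ B ∧ B ⊆ P ∧ ∑ p ∈ B, c p ≤ 1 ∧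
      (∀ B', P₀ ⊆ B' → B' ⊆ P → ∑ p ∈ B', c p ≤ 1 → ∑ p ∈ B', c p ≤ ∑ p ∈ B, c p) ∧
      (∀ p ∈ P, p ∉ B → 0 < c p → 1 < ∑ r ∈ B, c r + c p) := by
  obtain ⟨B, hB, hmax⟩ := exists_max_image
    {B ∈ P.powerset | P₀ ⊆ B ∧ ∑ p ∈ B, c p ≤ 1} (fun B ↦ ∑ p ∈ B, c p)
    ⟨P₀, by simp [hP₀, hsum]⟩
  rw [mem_filter, mem_powerset] at hB
  have hmax' : ∀ B', P₀ ⊆ B' → B' ⊆ P → ∑ p ∈ B', c p ≤ 1 → ∑ p ∈ B', c p ≤ ∑ p ∈ B, c p :=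
    fun B' h1 h2 h3 ↦ hmax B' (by simp [h1, h2, h3])
  refine ⟨B, hB.2.1, hB.1, hB.2.2, hmax', fun p hp hpB hcp ↦ ?_⟩
  by_contra! h
  have h1 := hmax' (insert p B) (hB.2.1.trans (subset_insert _ _))
    (insert_subset hp hB.1) (by rw [sum_insert hpB]; linarith)
  rw [sum_insert hpB] at h1
  linarith

lemma le_prime_of_log (p : ℕ) (hp : p.Prime) (l : ℝ) (hl0 : 0 ≤ l) (hl : l ≤ Real.log p) :
    l ^ 2 / 2 ≤ p := by
  have hp0 : (0 : ℝ) < p := by exact_mod_cast hp.pos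
  have h1 := Real.quadratic_le_exp_of_nonneg hl0
  have h2 : Real.exp l ≤ p := by
    rw [← Real.exp_log hp0]; exact Real.exp_le_exp.2 hl
  linarith

/-- The primes whose logarithm is at most half of `log (2N)`. -/
noncomputable def smallPrimes (N : ℕ) : Finset ℕ :=
  {p ∈ primesUpTo (2 * N) | Real.log (p : ℝ) ≤ Real.log (2 * N) / 2}

lemma log_five_thirds : 0.51 ≤ Real.log (5 / 3) := by
  rw [Real.le_log_iff_exp_le (by norm_num)]
  have := Real.exp_bound' (x := 0.51) (by norm_num) (by norm_num) (n := 6) (by norm_num)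
  refine this.trans ?_
  norm_num [Finset.sum_range_succ, Nat.factorial]

section Weights

variable (x : ℕ →* ℝ) (hx : ∀ n, x n = -1 ∨ x n = 0 ∨ x n = 1)

lemma smooth_div_ge (N p : ℕ) (hN : 1 ≤ N) (hp : 1 ≤ p) :
    smooth (fun _ ↦ 1) (2 * N) N - Real.log p ≤ smooth (fun _ ↦ 1) (2 * N) (N / p) := by
  have hN0 : (0 : ℝ) < N := by exact_mod_cast hN
  have hp1 : (1 : ℝ) ≤ p := by exact_mod_cast hp
  have h1 := smooth_one_sub_le (2 * N) (y := (N : ℝ) / p) (z := N) (by positivity)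
    (div_le_self hN0.le hp1)
  rw [Real.log_div hN0.ne' (by positivity)] at h1
  linarith

lemma smooth_one_le_log (N : ℕ) (hN : 1 ≤ N) (hU : 0 ≤ Real.log (2 * N)) :
    smooth (fun _ ↦ 1) (2 * N) N ≤ Real.log (2 * N) := by
  have hN0 : (0 : ℝ) < N := by exact_mod_cast hN
  have := smooth_one_le_max (2 * N) hN0
  rwa [max_eq_left hU] at this

include hx

/-- For `p ≤ √(2N)` the losses `log p` from the scale `N / p` and `U / 2 - log p` from the pair
terms add up to `U / 2`, independently of `p`; the factors `1 / p` cost at most `1` more. -/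
lemma weight_small (N p : ℕ) (hN : 1 ≤ N) (hp : p.Prime) (hU : 0 ≤ Real.log (2 * N))
    (hl : Real.log p ≤ Real.log (2 * N) / 2) :
    (1 - x p) / p * (smooth (fun _ ↦ 1) (2 * N) N - Real.log (2 * N) / 2 - 1)
      ≤ (1 - x p) / p * ((1 - (-x p) / p) * smooth (fun _ ↦ 1) (2 * N) (N / p)
        - (1 - (1 - x p) / p) * max (Real.log (2 * N) / 2 - Real.log p) 0) := by
  have hp2 : (2 : ℝ) ≤ p := by exact_mod_cast hp.two_le
  have h1 := smooth_div_ge N p hN hp.one_le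
  have h2 := smooth_one_le_log N hN hU
  have h3 : Real.log p ≤ p := (Real.log_le_sub_one_of_pos (by linarith)).trans (by linarith)
  have h4 : Real.log p * (1 / p) ≤ 1 := by
    rw [mul_one_div, div_le_one (by linarith)]; exact h3
  have hl0 : 0 ≤ Real.log p := Real.log_natCast_nonneg p
  have hi0 : (0 : ℝ) < 1 / p := by positivity
  have hi1 : (1 : ℝ) / p ≤ 1 / 2 := one_div_le_one_div_of_le (by norm_num) hp2
  rw [max_eq_left (by linarith)]
  set U := Real.log (2 * N)
  set T := smooth (fun _ ↦ 1) (2 * N) N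
  set Tp := smooth (fun _ ↦ 1) (2 * N) (N / p)
  set l := Real.log p
  have hc : 0 ≤ (1 - x p) / p :=
    div_nonneg (by linarith [(val_bounds x hx p).2]) (by linarith)
  rcases hx p with h | h | h
  · refine mul_le_mul_of_nonneg_left ?_ hc
    rw [h, show (-(-1 : ℝ)) / p = 1 / p by norm_num,
      show (1 - (-1 : ℝ)) / p = 2 * (1 / p) by ring]
    set i := 1 / (p : ℝ)
    nlinarith [mul_le_mul_of_nonneg_left h1 (show 0 ≤ 1 - i by linarith)]
  · refine mul_le_mul_of_nonneg_left ?_ hc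
    rw [h, show (-(0 : ℝ)) / p = 0 by norm_num, show (1 - (0 : ℝ)) / p = 1 / p by ring]
    set i := 1 / (p : ℝ)
    nlinarith [mul_nonneg hi0.le (show 0 ≤ U / 2 - l by linarith)]
  · simp [h]

/-- For `p > √(2N)` there are no pair terms, and the only loss is `log p`. -/
lemma weight_large (N p : ℕ) (hN : 1 ≤ N) (hp : p.Prime) (hU : 59 ≤ Real.log (2 * N))
    (hl : Real.log (2 * N) / 2 < Real.log p) :
    (1 - x p) / p * (smooth (fun _ ↦ 1) (2 * N) N - Real.log p - 0.07)
      ≤ (1 - x p) / p * ((1 - (-x p) / p) * smooth (fun _ ↦ 1) (2 * N) (N / p)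
        - (1 - (1 - x p) / p) * max (Real.log (2 * N) / 2 - Real.log p) 0) := by
  have hN0 : (0 : ℝ) < N := by exact_mod_cast hN
  have hp2 : (2 : ℝ) ≤ p := by exact_mod_cast hp.two_le
  have h1 := smooth_div_ge N p hN hp.one_le
  have h2 := smooth_one_le_log N hN (by linarith)
  have h3 : 0 ≤ smooth (fun _ ↦ 1) (2 * N) ((N : ℝ) / p) :=
    smooth_one_nonneg (2 * N) (by positivity)
  have hq := le_prime_of_log p hp (Real.log p) (by linarith) le_rfl
  have hi0 : (0 : ℝ) < 1 / p := by positivity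
  have hi1 : (1 : ℝ) / p ≤ 1 / 2 := one_div_le_one_div_of_le (by norm_num) hp2
  have h4 : Real.log p * (1 / p) ≤ 0.07 := by
    rw [mul_one_div, div_le_iff₀ (by linarith)]
    nlinarith
  rw [max_eq_right (by linarith), mul_zero, sub_zero]
  set U := Real.log (2 * N)
  set T := smooth (fun _ ↦ 1) (2 * N) N
  set Tp := smooth (fun _ ↦ 1) (2 * N) (N / p)
  set l := Real.log p
  have hc : 0 ≤ (1 - x p) / p :=
    div_nonneg (by linarith [(val_bounds x hx p).2]) (by linarith)
  rcases hx p with h | h | h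
  · refine mul_le_mul_of_nonneg_left ?_ hc
    rw [h, show (-(-1 : ℝ)) / p = 1 / p by norm_num]
    set i := 1 / (p : ℝ)
    nlinarith [mul_le_mul_of_nonneg_left h1 (show 0 ≤ 1 - i by linarith)]
  · refine mul_le_mul_of_nonneg_left ?_ hc
    rw [h, show (-(0 : ℝ)) / p = 0 by norm_num]
    linarith
  · simp [h]

omit hx in
lemma smooth_eq_sub (N : ℕ) :
    smooth x (2 * N) N = smooth (fun _ ↦ 1) (2 * N) N
      - ∑ n ∈ Ioc 0 (2 * N), (1 - x n) * (rho (n / (N : ℝ)) / n) := by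
  unfold smooth
  rw [← sum_sub_distrib]
  exact sum_congr rfl fun n _ ↦ by ring

/-- The case where primes up to `√(2N)` alone carry mass more than one. A maximal subset of mass at
most `1` then has mass at least `1 / 2`, since any further prime carries at most that mass. -/
lemma smooth_le_of_mass (N : ℕ) (hN : 1 ≤ N) (hU : 59 ≤ Real.log (2 * N))
    (hQ : 1 < ∑ p ∈ smallPrimes N, (1 - x p) / p) :
    smooth x (2 * N) N ≤ 3 / 4 * Real.log (2 * N) + 1 := by
  classical
  set P := smallPrimes N with hP
  set c : ℕ → ℝ := fun p ↦ (1 - x p) / p with hc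
  have hc0 : ∀ p, 0 ≤ c p := fun p ↦
    div_nonneg (by linarith [(val_bounds x hx p).2]) (by positivity)
  obtain ⟨B, -, hBP, hB1, hmax, hadd⟩ := exists_maximal_subset P ∅ (by simp) c (by simp)
  have hex : ∃ p ∈ P, p ∉ B ∧ 0 < c p := by
    by_contra! h
    have : ∑ p ∈ B, c p = ∑ p ∈ P, c p :=
      sum_subset hBP fun p hp hpB ↦ le_antisymm (h p hp hpB) (hc0 p)
    linarith
  obtain ⟨p, hp, hpB, hcp⟩ := hex
  have h1 := hadd p hp hpB hcp
  have hpp : p.Prime := (mem_primesUpTo.1 (mem_filter.1 hp).1).1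
  have hcp1 : c p ≤ 1 := by
    have hp2 : (2 : ℝ) ≤ p := by exact_mod_cast hpp.two_le
    rw [hc]; dsimp only
    rw [div_le_one (by linarith)]
    linarith [(val_bounds x hx p).1]
  have h2 := hmax {p} (by simp) (by simpa using hp) (by simpa using hcp1)
  rw [sum_singleton] at h2
  have hD := defect_ge x hx N hN B (hBP.trans (filter_subset _ _)) hB1
  have hD2 : (∑ p ∈ B, c p) * (smooth (fun _ ↦ 1) (2 * N) N - Real.log (2 * N) / 2 - 1)
      ≤ ∑ n ∈ Ioc 0 (2 * N), (1 - x n) * (rho (n / (N : ℝ)) / n) := by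
    rw [sum_mul]
    refine le_trans (sum_le_sum fun p hp ↦ ?_) hD
    have hp' := mem_filter.1 (hBP hp)
    exact weight_small x hx N p hN (mem_primesUpTo.1 hp'.1).1 (by linarith) hp'.2
  have hT := smooth_one_le_log N hN (by linarith)
  have hD0 : 0 ≤ ∑ n ∈ Ioc 0 (2 * N), (1 - x n) * (rho (n / (N : ℝ)) / n) :=
    sum_nonneg fun n _ ↦ mul_nonneg (by linarith [(val_bounds x hx n).2])
      (div_nonneg (rho_nonneg (by positivity)) (by positivity))
  rw [smooth_eq_sub x]
  set Q := ∑ p ∈ B, c p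
  set D := ∑ n ∈ Ioc 0 (2 * N), (1 - x n) * (rho (n / (N : ℝ)) / n)
  set U := Real.log (2 * N)
  set T := smooth (fun _ ↦ 1) (2 * N) N
  rcases le_total (T - U / 2 - 1) 0 with h | h
  · linarith
  · nlinarith [mul_le_mul_of_nonneg_right (show 1 / 2 ≤ Q by linarith) h]

/-- The case where primes up to `√(2N)` carry mass at most one. All of them are kept, and larger
primes are added, each of mass below `1 / 30`, until the mass reaches `29 / 30`. The primes with
`log p` above `0.6 U` are paid for by the Mertens estimate. -/
lemma smooth_le_of_mass_le (N : ℕ) (hN : 1 ≤ N) (hU : 59 ≤ Real.log (2 * N)) (S : ℝ)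
    (hS : ∑ n ∈ Ioc 0 (2 * N), x n * hat (n / (N : ℝ)) ≤ S) (hSN : S ≤ N / 30)
    (hQ : ∑ p ∈ smallPrimes N, (1 - x p) / p ≤ 1) :
    smooth x (2 * N) N ≤ 0.8015 * Real.log (2 * N) + 2.04 := by
  classical
  have hN0 : (0 : ℝ) < N := by exact_mod_cast hN
  set P := primesUpTo (2 * N) with hP
  set c : ℕ → ℝ := fun p ↦ (1 - x p) / p with hc
  have hc0 : ∀ p, 0 ≤ c p := fun p ↦
    div_nonneg (by linarith [(val_bounds x hx p).2]) (by positivity)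
  obtain ⟨B, hPB, hBP, hB1, -, hadd⟩ := exists_maximal_subset P _ (filter_subset _ _) c hQ
  have hQ29 : 29 / 30 ≤ ∑ p ∈ B, c p := by
    by_cases hex : ∃ p ∈ P, p ∉ B ∧ 0 < c p
    · obtain ⟨p, hp, hpB, hcp⟩ := hex
      have h1 := hadd p hp hpB hcp
      have hpp : p.Prime := (mem_primesUpTo.1 hp).1
      have h2 : Real.log (2 * N) / 2 < Real.log p := by
        by_contra! h
        exact hpB (hPB (mem_filter.2 ⟨hp, h⟩))
      have h3 := le_prime_of_log p hpp 29.5 (by norm_num) (by linarith)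
      have h4 : c p ≤ 1 / 30 := by
        rw [hc]; dsimp only
        rw [div_le_iff₀ (by linarith)]
        linarith [(val_bounds x hx p).1]
      linarith
    · push Not at hex
      have h1 : ∑ p ∈ B, c p = ∑ p ∈ P, c p :=
        sum_subset hBP fun p hp hpB ↦ le_antisymm (hex p hp hpB) (hc0 p)
      have h2 := prime_defect x hx N hN S hS
      have h3 : S / N ≤ 1 / 30 := by
        rw [div_le_iff₀ hN0]; linarith
      rw [h1]
      linarith
  have hD := defect_ge x hx N hN B hBP hB1
  set U := Real.log (2 * N) with hUdef
  set T := smooth (fun _ ↦ 1) (2 * N) N with hTdef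
  -- A threshold `y` leads to the leading term `y + 2 (U - y - y log (U / y))`, which is smallest at
  -- `y = exp (-1 / 2) U`; `0.6` is a convenient approximation of `exp (-1 / 2)`.
  have hM := sum_primes_max_le (2 * N) (by push_cast; exact hU) (0.6 * U) (by linarith)
    (by push_cast; linarith)
  push_cast at hM
  rw [← hUdef, show U / (0.6 * U) = 5 / 3 by field_simp; norm_num,
    show 0.6 * U / U = 0.6 by field_simp] at hM
  have hM2 : ∑ p ∈ P, max (Real.log p - 0.6 * U) 0 / p ≤ 0.094 * U + 0.98 := by
    refine hM.trans ?_
    nlinarith [log_five_thirds]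
  have hD2 : (T - 0.6 * U - 0.07) * ∑ p ∈ B, c p
      - 2 * ∑ p ∈ P, max (Real.log p - 0.6 * U) 0 / p
      ≤ ∑ n ∈ Ioc 0 (2 * N), (1 - x n) * (rho (n / (N : ℝ)) / n) := by
    have h1 : ∑ p ∈ B, max (Real.log p - 0.6 * U) 0 / p
        ≤ ∑ p ∈ P, max (Real.log p - 0.6 * U) 0 / (p : ℝ) :=
      sum_le_sum_of_subset_of_nonneg hBP fun p _ _ ↦
        div_nonneg (le_max_right _ _) (by positivity)
    have h2 : (T - 0.6 * U - 0.07) * ∑ p ∈ B, c p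
        - 2 * ∑ p ∈ B, max (Real.log p - 0.6 * U) 0 / (p : ℝ)
        = ∑ p ∈ B, ((T - 0.6 * U - 0.07) * c p - 2 * (max (Real.log p - 0.6 * U) 0 / p)) := by
      rw [sum_sub_distrib, mul_sum, mul_sum]
    refine le_trans ?_ hD
    refine le_trans (by linarith) (h2.le.trans (sum_le_sum fun p hp ↦ ?_))
    have hpp : p.Prime := (mem_primesUpTo.1 (hBP hp)).1
    have hp0 : (0 : ℝ) < p := by exact_mod_cast hpp.pos
    have hm0 : 0 ≤ max (Real.log p - 0.6 * U) 0 / p := div_nonneg (le_max_right _ _) hp0.le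
    have hcm : c p * max (Real.log p - 0.6 * U) 0 ≤ 2 * (max (Real.log p - 0.6 * U) 0 / p) := by
      rw [hc]; dsimp only
      rw [div_mul_eq_mul_div, mul_div_assoc]
      exact mul_le_mul_of_nonneg_right (by linarith [(val_bounds x hx p).1]) hm0
    rcases le_or_gt (Real.log p) (U / 2) with hl | hl
    · refine le_trans ?_ (weight_small x hx N p hN hpp (by linarith) hl)
      have : c p * (T - 0.6 * U - 0.07) ≤ c p * (T - U / 2 - 1) :=
        mul_le_mul_of_nonneg_left (by linarith) (hc0 p)
      linarith
    · refine le_trans ?_ (weight_large x hx N p hN hpp hU hl)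
      have : c p * (T - 0.6 * U - 0.07 - max (Real.log p - 0.6 * U) 0)
          ≤ c p * (T - Real.log p - 0.07) :=
        mul_le_mul_of_nonneg_left
          (by linarith [le_max_left (Real.log p - 0.6 * U) 0]) (hc0 p)
      linarith
  have hT := smooth_one_le_log N hN (by linarith)
  have hD0 : 0 ≤ ∑ n ∈ Ioc 0 (2 * N), (1 - x n) * (rho (n / (N : ℝ)) / n) :=
    sum_nonneg fun n _ ↦ mul_nonneg (by linarith [(val_bounds x hx n).2])
      (div_nonneg (rho_nonneg (by positivity)) (by positivity))
  rw [smooth_eq_sub x]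
  set Q := ∑ p ∈ B, c p
  set D := ∑ n ∈ Ioc 0 (2 * N), (1 - x n) * (rho (n / (N : ℝ)) / n)
  rw [← hTdef]
  rw [← hTdef, ← hUdef] at hT
  rcases le_total (T - 0.6 * U - 0.07) 0 with h | h
  · linarith
  · nlinarith [mul_le_mul_of_nonneg_left hQ29 h]

/-- The main estimate: a `{-1, 0, 1}`-valued completely multiplicative `x` that barely correlates
with the tent has a smoothed logarithmic sum well below `log (2N)`. -/
lemma smooth_le (N : ℕ) (hN : 1 ≤ N) (hU : 59 ≤ Real.log (2 * N)) (S : ℝ)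
    (hS : ∑ n ∈ Ioc 0 (2 * N), x n * hat (n / (N : ℝ)) ≤ S) (hSN : S ≤ N / 30) :
    smooth x (2 * N) N ≤ 0.8015 * Real.log (2 * N) + 2.04 := by
  rcases le_or_gt (∑ p ∈ smallPrimes N, (1 - x p) / p) 1 with h | h
  · exact smooth_le_of_mass_le x hx N hN hU S hS hSN h
  · linarith [smooth_le_of_mass x hx N hN hU h]

end Weights

/-! ### Character sums -/

section Character

open scoped ZMod

variable {q : ℕ} [NeZero q] (χ : DirichletCharacter ℂ q)

lemma sum_range_zmod (f : ZMod q → ℂ) : ∑ b ∈ range q, f b = ∑ z : ZMod q, f z := by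
  refine sum_nbij' (fun b ↦ (b : ZMod q)) ZMod.val (fun _ _ ↦ mem_univ _)
    (fun z _ ↦ mem_range.2 (ZMod.val_lt z)) (fun b hb ↦ ZMod.val_cast_of_lt (mem_range.1 hb))
    (fun z _ ↦ ZMod.natCast_zmod_val z) fun _ _ ↦ rfl

lemma sum_period (hχ : χ ≠ 1) (c : ZMod q) : ∑ b ∈ range q, χ (c + b) = 0 := by
  rw [sum_range_zmod fun b ↦ χ (c + b)]
  refine (Equiv.sum_comp (Equiv.addLeft c) χ).trans ?_
  exact MulChar.sum_eq_zero_of_ne_one hχ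

lemma sum_range_mod (hχ : χ ≠ 1) (c : ZMod q) (M : ℕ) :
    ∑ b ∈ range M, χ (c + b) = ∑ b ∈ range (M % q), χ (c + b) := by
  have h : ∀ k, ∑ b ∈ range (M % q + q * k), χ (c + b) = ∑ b ∈ range (M % q), χ (c + b) := by
    intro k
    induction k with
    | zero => simp
    | succ k ih =>
      rw [mul_add, mul_one, ← add_assoc, sum_range_add, ih]
      have := sum_period χ hχ (c + (M % q + q * k : ℕ))
      simp only [Nat.cast_add, add_assoc] at this ⊢
      rw [this, add_zero]
  have := h (M / q)
  rwa [Nat.mod_add_div] at this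

lemma norm_sum_range_le (hχ : χ ≠ 1) (c : ZMod q) (M : ℕ) :
    ‖∑ b ∈ range M, χ (c + b)‖ ≤ q := by
  rw [sum_range_mod χ hχ]
  refine (norm_sum_le _ _).trans ((sum_le_sum fun b _ ↦ χ.norm_le_one _).trans ?_)
  simp only [sum_const, card_range, nsmul_eq_mul, mul_one, Nat.cast_le]
  exact (Nat.mod_lt _ (NeZero.pos q)).le

/-- A quadratic primitive character is, up to a constant of absolute value `√q`, its own Fourier
transform. -/
lemma norm_dft_le (hprim : χ.IsPrimitive) (hquad : χ ^ 2 = 1) (k : ZMod q) :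
    ‖𝓕 (χ : ZMod q → ℂ) k‖ ≤ √q := by
  have hinv : χ⁻¹ = χ := by
    rw [inv_eq_iff_mul_eq_one, ← sq, hquad]
  set τ := gaussSum χ ZMod.stdAddChar
  have h1 : ∀ j, 𝓕 (χ : ZMod q → ℂ) j = χ (-1) * τ * χ j := by
    intro j
    rw [hprim.fourierTransform_eq_inv_mul_gaussSum, hinv, ← neg_one_mul, map_mul]
    ring
  have hm1 : ‖χ (-1)‖ = 1 := by
    have := χ.unit_norm_eq_one (-1)
    simpa using this
  have h2 := congrFun (ZMod.dft_dft (χ : ZMod q → ℂ)) 1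
  have h3 : 𝓕 (χ : ZMod q → ℂ) = (χ (-1) * τ) • (χ : ZMod q → ℂ) := by
    ext j; rw [h1]; rfl
  rw [h3, ZMod.dft_const_smul, h3] at h2
  simp only [Pi.smul_apply, smul_eq_mul, map_one, mul_one] at h2
  have h4 := congrArg norm h2
  rw [norm_mul, norm_mul, norm_mul, hm1, one_mul, mul_one, Complex.norm_natCast] at h4
  have h5 : ‖τ‖ = √q := by
    rw [← h4, Real.sqrt_mul_self (norm_nonneg _)]
  rw [h1, norm_mul, norm_mul, hm1, one_mul, h5]
  exact mul_le_of_le_one_right (Real.sqrt_nonneg _) (χ.norm_le_one _)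

/-- Parseval for the indicator function of `{0, …, M - 1}` on `ZMod q`. -/
lemma sum_norm_sq_exp (M : ℕ) (hM : M ≤ q) :
    ∑ k : ZMod q, ‖∑ a ∈ range M, ZMod.stdAddChar (k * (a : ZMod q))‖ ^ 2 = (q : ℝ) * M := by
  have h1 : ∀ k : ZMod q, ((‖∑ a ∈ range M, ZMod.stdAddChar (k * (a : ZMod q))‖ ^ 2 : ℝ) : ℂ)
      = ∑ a ∈ range M, ∑ b ∈ range M, ZMod.stdAddChar (k * ((a : ZMod q) - (b : ZMod q))) := by
    intro k
    push_cast
    rw [← Complex.mul_conj', map_sum, sum_mul_sum]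
    refine sum_congr rfl fun a _ ↦ sum_congr rfl fun b _ ↦ ?_
    rw [← AddChar.map_neg_eq_conj, ← AddChar.map_add_eq_mul]
    congr 1; ring
  have h2 : ((∑ k : ZMod q, ‖∑ a ∈ range M, ZMod.stdAddChar (k * (a : ZMod q))‖ ^ 2 : ℝ) : ℂ)
      = ((q * M : ℝ) : ℂ) := by
    rw [Complex.ofReal_sum, sum_congr rfl fun k _ ↦ h1 k, sum_comm,
      sum_congr rfl fun a _ ↦ sum_comm]
    simp_rw [AddChar.sum_mulShift _ (ZMod.isPrimitive_stdAddChar q)]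
    have h3 : ∀ a ∈ range M, ∑ b ∈ range M,
        (if (a : ZMod q) - b = 0 then (Fintype.card (ZMod q) : ℂ) else 0) = q := by
      intro a ha
      rw [sum_eq_single_of_mem a ha]
      · simp [ZMod.card]
      · intro b hb hba
        rw [if_neg]
        rw [sub_eq_zero]
        intro h
        have := congrArg ZMod.val h
        rw [ZMod.val_cast_of_lt ((mem_range.1 ha).trans_le hM),
          ZMod.val_cast_of_lt ((mem_range.1 hb).trans_le hM)] at this
        exact hba this.symm
    have h4 : ∀ a b : ℕ, ((if (a : ZMod q) - b = 0 then Fintype.card (ZMod q) else 0 : ℕ) : ℂ)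
        = if (a : ZMod q) - b = 0 then (Fintype.card (ZMod q) : ℂ) else 0 := by
      intro a b; split_ifs <;> simp
    simp_rw [h4]
    rw [sum_congr rfl h3]
    simp [mul_comm]
  exact_mod_cast h2

lemma norm_double_sum_le_of_le (hprim : χ.IsPrimitive) (hquad : χ ^ 2 = 1) (M : ℕ)
    (hM : M ≤ q) :
    ‖∑ a ∈ range M, ∑ b ∈ range M, χ (a + b + 1)‖ ≤ √q * M := by
  have hq0 : (0 : ℝ) < q := by exact_mod_cast NeZero.pos q
  have h1 : ∀ j : ZMod q, (q : ℂ) * χ j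
      = ∑ k : ZMod q, ZMod.stdAddChar (k * j) * 𝓕 (χ : ZMod q → ℂ) k := by
    intro j
    have h2 := congrFun (ZMod.dft_dft (χ : ZMod q → ℂ)) (-j)
    rw [ZMod.dft_apply] at h2
    simp only [mul_neg, neg_neg, smul_eq_mul] at h2
    exact h2.symm
  have h3 : (q : ℂ) * ∑ a ∈ range M, ∑ b ∈ range M, χ (a + b + 1)
      = ∑ k : ZMod q, 𝓕 (χ : ZMod q → ℂ) k * ZMod.stdAddChar k *
        (∑ a ∈ range M, ZMod.stdAddChar (k * (a : ZMod q))) ^ 2 := by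
    simp_rw [mul_sum, h1, sq, sum_mul_sum]
    simp_rw [mul_sum]
    rw [sum_congr rfl fun a _ ↦ sum_comm, sum_comm]
    refine sum_congr rfl fun k _ ↦ sum_congr rfl fun a _ ↦ sum_congr rfl fun b _ ↦ ?_
    rw [mul_add, mul_add, mul_one, AddChar.map_add_eq_mul, AddChar.map_add_eq_mul]
    ring
  have h4 : (q : ℝ) * ‖∑ a ∈ range M, ∑ b ∈ range M, χ (a + b + 1)‖ ≤ q * (√q * M) := by
    have : (q : ℝ) * ‖∑ a ∈ range M, ∑ b ∈ range M, χ (a + b + 1)‖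
        = ‖(q : ℂ) * ∑ a ∈ range M, ∑ b ∈ range M, χ (a + b + 1)‖ := by
      rw [norm_mul, Complex.norm_natCast]
    rw [this, h3]
    refine (norm_sum_le _ _).trans ?_
    calc _ ≤ ∑ k : ZMod q, √q * ‖∑ a ∈ range M, ZMod.stdAddChar (k * (a : ZMod q))‖ ^ 2 := by
          refine sum_le_sum fun k _ ↦ ?_
          rw [norm_mul, norm_mul, norm_pow, AddChar.norm_apply, mul_one]
          exact mul_le_mul_of_nonneg_right (norm_dft_le χ hprim hquad k) (by positivity)
      _ = q * (√q * M) := by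
          rw [← mul_sum, sum_norm_sq_exp M hM]; ring
  exact le_of_mul_le_mul_left h4 hq0

/-- A Pólya–Vinogradov bound for a smoothed character sum; smoothing over a convolution square
removes the logarithm, by Parseval. -/
lemma norm_double_sum_le (hprim : χ.IsPrimitive) (hquad : χ ^ 2 = 1) (hχ : χ ≠ 1) (M : ℕ) :
    ‖∑ a ∈ range M, ∑ b ∈ range M, χ (a + b + 1)‖ ≤ √q * M := by
  have h1 : ∑ a ∈ range M, ∑ b ∈ range M, χ (a + b + 1)
      = ∑ a ∈ range (M % q), ∑ b ∈ range (M % q), χ (a + b + 1) := by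
    have h2 : ∀ a : ZMod q, ∑ b ∈ range M, χ (a + b + 1) = ∑ b ∈ range (M % q), χ (a + b + 1) := by
      intro a
      have := sum_range_mod χ hχ (a + 1) M
      simpa only [add_right_comm] using this
    simp_rw [h2]
    rw [sum_comm]
    conv_rhs => rw [sum_comm]
    refine sum_congr rfl fun b _ ↦ ?_
    have := h2 b
    simpa only [add_comm (b : ZMod q)] using this
  rw [h1]
  refine (norm_double_sum_le_of_le χ hprim hquad _ (Nat.mod_lt _ (NeZero.pos q)).le).trans ?_
  gcongr
  exact Nat.mod_le _ _

end Character

/-! ### Correlation of a real character with the tent -/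

/-- Summation by parts against a truncated line. -/
lemma sum_mul_max_eq (f : ℕ → ℝ) (L K : ℕ) (hK : K ≤ L + 1) :
    ∑ n ∈ Ioc 0 L, f n * max ((K : ℝ) - n) 0 = ∑ m ∈ range K, ∑ n ∈ Ioc 0 m, f n := by
  induction K with
  | zero =>
    rw [range_zero, sum_empty]
    refine sum_eq_zero fun n _ ↦ ?_
    rw [max_eq_right (by simp), mul_zero]
  | succ K ih =>
    rw [sum_range_succ, ← ih (by omega), ← sub_eq_iff_eq_add', ← sum_sub_distrib]
    have h1 : Ioc 0 K = {n ∈ Ioc 0 L | n ≤ K} := by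
      ext n; simp only [mem_Ioc, mem_filter]; omega
    rw [h1, sum_filter]
    refine sum_congr rfl fun n _ ↦ ?_
    split_ifs with h
    · have : (n : ℝ) ≤ K := by exact_mod_cast h
      push_cast
      rw [max_eq_left (by linarith), max_eq_left (by linarith)]; ring
    · have : (K : ℝ) + 1 ≤ n := by exact_mod_cast not_le.1 h
      push_cast
      rw [max_eq_right (by linarith), max_eq_right (by linarith)]; ring

/-- The tent is the convolution square of an interval, so a tent sum is a double sum over a
square. -/
lemma sum_hat_eq_double (f : ℕ → ℝ) (L M : ℕ) (hM : 1 ≤ M) (hL : 2 * M ≤ L) :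
    ∑ n ∈ Ioc 0 L, f n * (M * hat (n / (M : ℝ)))
      = ∑ a ∈ range M, ∑ b ∈ range M, f (a + b + 1) := by
  have hM0 : (0 : ℝ) < M := by exact_mod_cast hM
  simp_rw [hat_div _ hM0, mul_sub]
  rw [sum_sub_distrib]
  have h1 := sum_mul_max_eq f L (2 * M) (by omega)
  have h2 := sum_mul_max_eq f L M (by omega)
  push_cast at h1
  have h3 : ∑ n ∈ Ioc 0 L, f n * (2 * max ((M : ℝ) - n) 0)
      = 2 * ∑ m ∈ range M, ∑ n ∈ Ioc 0 m, f n := by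
    rw [← h2, mul_sum]
    exact sum_congr rfl fun n _ ↦ by ring
  rw [h1, h3, two_mul M, sum_range_add, two_mul, add_sub_add_left_eq_sub, ← sum_sub_distrib]
  refine sum_congr rfl fun a _ ↦ ?_
  have h4 : ∀ k : ℕ, ∑ n ∈ Ioc 0 (a + k), f n
      = ∑ n ∈ Ioc 0 a, f n + ∑ b ∈ range k, f (a + b + 1) := by
    intro k
    induction k with
    | zero => simp
    | succ k ih => rw [← add_assoc, sum_Ioc_succ_top (by omega), ih, sum_range_succ]; ring
  rw [add_comm M a, h4]; ring

lemma abs_sum_max_sub_le (x : ℕ → ℝ) (hx : ∀ n, |x n| ≤ 1) (L : ℕ) {y z : ℝ} (hy : 0 ≤ y)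
    (hyz : y ≤ z) :
    |∑ n ∈ Ioc 0 L, x n * max (z - n) 0 - ∑ n ∈ Ioc 0 L, x n * max (y - n) 0|
      ≤ (z - y) * z := by
  rw [← sum_sub_distrib]
  refine (abs_sum_le_sum_abs _ _).trans ?_
  have h1 : ∀ n ∈ Ioc 0 L, |x n * max (z - n) 0 - x n * max (y - n) 0|
      ≤ if n ≤ ⌊z⌋₊ then z - y else 0 := by
    intro n _
    rw [← mul_sub, abs_mul]
    split_ifs with h
    · have h2 : |max (z - n) 0 - max (y - n) 0| ≤ z - y := by
        have := abs_max_sub_max_le_abs (z - n) (y - n) 0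
        rwa [sub_sub_sub_cancel_right, abs_of_nonneg (by linarith : 0 ≤ z - y)] at this
      exact (mul_le_mul (hx n) h2 (abs_nonneg _) zero_le_one).trans_eq (one_mul _)
    · have h2 := Nat.lt_of_floor_lt (not_le.1 h)
      rw [max_eq_right (by linarith), max_eq_right (by linarith)]; simp
  refine (sum_le_sum h1).trans ?_
  rw [← sum_filter, sum_const, nsmul_eq_mul, mul_comm]
  refine mul_le_mul_of_nonneg_left ?_ (by linarith)
  refine le_trans ?_ (Nat.floor_le (hy.trans hyz))
  have : #{n ∈ Ioc 0 L | n ≤ ⌊z⌋₊} ≤ #(Ioc 0 ⌊z⌋₊) :=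
    card_le_card fun n hn ↦ by
      simp only [mem_filter, mem_Ioc] at hn ⊢; omega
  simp only [Nat.card_Ioc, tsub_zero] at this
  exact_mod_cast this

section RealChar

variable {q : ℕ} (χ : DirichletCharacter ℂ q)
  (hreal : ∀ n : ZMod q, (χ n).im = 0)

include hreal in
lemma coe_re (n : ZMod q) : (((χ n).re : ℝ) : ℂ) = χ n :=
  Complex.ext (by simp) (by simp [hreal n])

/-- A real-valued Dirichlet character as a completely multiplicative function `ℕ → ℝ`. -/
noncomputable def realChar : ℕ →* ℝ where
  toFun n := (χ (n : ZMod q)).re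
  map_one' := by simp
  map_mul' m n := by simp [Complex.mul_re, hreal]

lemma realChar_apply (n : ℕ) : realChar χ hreal n = (χ (n : ZMod q)).re := rfl

lemma coe_realChar (n : ℕ) : ((realChar χ hreal n : ℝ) : ℂ) = χ (n : ZMod q) :=
  coe_re χ hreal n

lemma sum_div_eq_ofReal (m : ℕ) :
    ∑ n ∈ range m, χ (n : ZMod q) / n
      = ((∑ n ∈ range m, realChar χ hreal n / n : ℝ) : ℂ) := by
  push_cast
  simp_rw [coe_realChar]

lemma realChar_mem (hquad : χ ^ 2 = 1) (n : ℕ) :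
    realChar χ hreal n = -1 ∨ realChar χ hreal n = 0 ∨ realChar χ hreal n = 1 := by
  by_cases hn : IsUnit (n : ZMod q)
  · have h1 : χ (n : ZMod q) ^ 2 = 1 := by
      rw [← MulChar.pow_apply' χ two_ne_zero, hquad, MulChar.one_apply hn]
    rw [← coe_realChar χ hreal] at h1
    have h2 : realChar χ hreal n ^ 2 = 1 := by exact_mod_cast h1
    rcases mul_self_eq_one_iff.1 (sq (realChar χ hreal n) ▸ h2) with h | h
    · exact .inr (.inr h)
    · exact .inl h
  · right; left
    rw [realChar_apply, χ.map_nonunit hn]; rfl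

lemma abs_realChar_le (n : ℕ) : |realChar χ hreal n| ≤ 1 :=
  (Complex.abs_re_le_norm _).trans (χ.norm_le_one _)

variable [NeZero q] (hprim : χ.IsPrimitive) (hquad : χ ^ 2 = 1) (hχ : χ ≠ 1)
include hprim hquad hχ

lemma abs_sum_hat_nat_le (L M : ℕ) (hM : 1 ≤ M) (hL : 2 * M ≤ L) :
    |∑ n ∈ Ioc 0 L, realChar χ hreal n * (M * hat (n / (M : ℝ)))| ≤ √q * M := by
  rw [sum_hat_eq_double _ L M hM hL]
  refine le_trans (le_of_eq ?_) (norm_double_sum_le χ hprim hquad hχ M)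
  rw [← Real.norm_eq_abs, ← Complex.norm_real]
  push_cast
  simp_rw [coe_realChar]
  push_cast
  rfl

/-- The tent sum at a real scale `y`, by comparison with the scale `⌊y⌋`. -/
lemma abs_sum_hat_le (L : ℕ) (y : ℝ) (hy : 1 ≤ y) (hL : 2 * y ≤ L) :
    |∑ n ∈ Ioc 0 L, realChar χ hreal n * hat (n / y)| ≤ √q + 6 := by
  have hM : 1 ≤ ⌊y⌋₊ := Nat.le_floor (by simpa using hy)
  set M := ⌊y⌋₊
  have hMy : (M : ℝ) ≤ y := Nat.floor_le (by linarith)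
  have hyM : y < M + 1 := Nat.lt_floor_add_one y
  have hM0 : (0 : ℝ) < M := by exact_mod_cast hM
  have h1 := abs_sum_hat_nat_le χ hreal hprim hquad hχ L M hM (by
    have : (2 * M : ℝ) ≤ L := by linarith
    exact_mod_cast this)
  have h2 := abs_sum_max_sub_le (realChar χ hreal) (abs_realChar_le χ hreal) L hM0.le hMy
  have h3 := abs_sum_max_sub_le (realChar χ hreal) (abs_realChar_le χ hreal) L
    (y := 2 * M) (z := 2 * y) (by linarith) (by linarith)
  have h4 : ∀ z : ℝ, 0 < z → ∑ n ∈ Ioc 0 L, realChar χ hreal n * (z * hat (n / z))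
      = ∑ n ∈ Ioc 0 L, realChar χ hreal n * max (2 * z - n) 0
        - 2 * ∑ n ∈ Ioc 0 L, realChar χ hreal n * max (z - n) 0 := by
    intro z hz
    rw [mul_sum, ← sum_sub_distrib]
    exact sum_congr rfl fun n _ ↦ by rw [hat_div _ hz]; ring
  rw [h4 _ hM0] at h1
  have h5 : |y * ∑ n ∈ Ioc 0 L, realChar χ hreal n * hat (n / y)| ≤ y * (√q + 6) := by
    have h6 : y * ∑ n ∈ Ioc 0 L, realChar χ hreal n * hat (n / y)
        = ∑ n ∈ Ioc 0 L, realChar χ hreal n * (y * hat (n / y)) := by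
      rw [mul_sum]
      exact sum_congr rfl fun n _ ↦ by ring
    rw [h6, h4 y (by linarith)]
    have h7 : √q * M ≤ √q * y := by gcongr
    have h8 : (y - M) * y ≤ 1 * y := by gcongr; linarith
    rw [abs_le] at h1 h2 h3 ⊢
    constructor <;> nlinarith
  rw [abs_mul, abs_of_pos (by linarith)] at h5
  exact le_of_mul_le_mul_left h5 (by linarith)

/-- Since the derivative of `y ↦ smooth x L y` is the tent sum over `y²`, the smoothed sum barely
moves beyond `y = N`. -/
lemma smooth_growth (L : ℕ) {N Y : ℝ} (hN : 1 ≤ N) (hNY : N ≤ Y) (hL : 2 * Y ≤ L) :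
    smooth (realChar χ hreal) L Y ≤ smooth (realChar χ hreal) L N + (√q + 6) / N := by
  have hd : ∀ y, 0 < y → HasDerivAt (fun y ↦ smooth (realChar χ hreal) L y + (√q + 6) * y⁻¹)
      ((∑ n ∈ Ioc 0 L, realChar χ hreal n * hat (n / y)) / y ^ 2 + (√q + 6) * (-(y ^ 2)⁻¹)) y :=
    fun y hy ↦ (hasDerivAt_smooth _ L y hy).add ((hasDerivAt_inv hy.ne').const_mul _)
  have : AntitoneOn (fun y ↦ smooth (realChar χ hreal) L y + (√q + 6) * y⁻¹) (Set.Icc N Y) := by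
    refine antitoneOn_of_deriv_nonpos (convex_Icc _ _) ?_ ?_ ?_
    · exact fun y hy ↦ (hd y (by linarith [hy.1])).continuousAt.continuousWithinAt
    · intro y hy
      rw [interior_Icc] at hy
      exact (hd y (by linarith [hy.1])).differentiableAt.differentiableWithinAt
    · intro y hy
      rw [interior_Icc] at hy
      rw [(hd y (by linarith [hy.1])).deriv]
      have h1 := (abs_le.1 (abs_sum_hat_le χ hreal hprim hquad hχ L y (by linarith [hy.1])
        (by linarith [hy.2]))).2
      have hy0 : 0 < (y ^ 2)⁻¹ := by
        have : 0 < y := by linarith [hy.1]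
        positivity
      rw [div_eq_mul_inv]
      nlinarith
  have h := this (Set.left_mem_Icc.2 hNY) (Set.right_mem_Icc.2 hNY) hNY
  have h2 : 0 ≤ (√q + 6) * Y⁻¹ := by
    have : 0 < Y := by linarith
    positivity
  simp only at h
  rw [div_eq_mul_inv]
  linarith

end RealChar

/-! ### From `L(1, χ)` to the smoothed sum -/

/-- Partial summation against a nonnegative antitone weight. -/
lemma norm_sum_mul_le (c : ℕ → ℂ) (b : ℕ → ℝ) (Q : ℝ) (m : ℕ)
    (hc : ∀ k, ‖∑ n ∈ Ico m k, c n‖ ≤ Q) (hb : ∀ n, m ≤ n → b (n + 1) ≤ b n)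
    (hb0 : ∀ n, m ≤ n → 0 ≤ b n) (k : ℕ) (hk : m ≤ k) :
    ‖∑ n ∈ Ico m k, c n * b n‖ ≤ Q * b m := by
  have h : ‖∑ n ∈ Ico m k, c n * b n - (∑ n ∈ Ico m k, c n) * b k‖ ≤ Q * (b m - b k) := by
    induction k, hk using Nat.le_induction with
    | base => simp
    | succ k hk ih =>
      have h1 : ∑ n ∈ Ico m (k + 1), c n * b n - (∑ n ∈ Ico m (k + 1), c n) * b (k + 1)
          = (∑ n ∈ Ico m k, c n * b n - (∑ n ∈ Ico m k, c n) * b k)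
            + (∑ n ∈ Ico m (k + 1), c n) * ((b k - b (k + 1) : ℝ) : ℂ) := by
        rw [sum_Ico_succ_top hk, sum_Ico_succ_top hk]; push_cast; ring
      rw [h1]
      refine (norm_add_le _ _).trans ?_
      rw [norm_mul, Complex.norm_real, Real.norm_of_nonneg (by linarith [hb k hk])]
      have := mul_le_mul_of_nonneg_right (hc (k + 1)) (show 0 ≤ b k - b (k + 1) by
        linarith [hb k hk])
      linarith
  have h2 : ‖(∑ n ∈ Ico m k, c n) * (b k : ℂ)‖ ≤ Q * b k := by
    rw [norm_mul, Complex.norm_real, Real.norm_of_nonneg (hb0 k hk)]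
    exact mul_le_mul_of_nonneg_right (hc k) (hb0 k hk)
  have h3 := norm_add_le (∑ n ∈ Ico m k, c n * b n - (∑ n ∈ Ico m k, c n) * b k)
    ((∑ n ∈ Ico m k, c n) * (b k : ℂ))
  rw [sub_add_cancel] at h3
  linarith

section Char

variable {q : ℕ} [NeZero q] (χ : DirichletCharacter ℂ q) (hχ : χ ≠ 1)
include hχ

lemma norm_sum_Ico_le (m k : ℕ) : ‖∑ n ∈ Ico m k, χ (n : ZMod q)‖ ≤ q := by
  rw [sum_Ico_eq_sum_range]
  simpa using norm_sum_range_le χ hχ (m : ZMod q) (k - m)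

lemma norm_LFunction_sub_le_of_one_lt (m : ℕ) (hm : 1 ≤ m) (s : ℝ) (hs : 1 < s) :
    ‖χ.LFunction s - ∑ n ∈ range m, LSeries.term (fun n ↦ χ (n : ZMod q)) s n‖ ≤ q / m := by
  have hm0 : (1 : ℝ) ≤ m := by exact_mod_cast hm
  have hsum := (ZMod.LSeriesSummable_of_one_lt_re χ (s := (s : ℂ)) (by simpa using hs)).hasSum
  have hL : χ.LFunction s = ∑' n, LSeries.term (fun n ↦ χ (n : ZMod q)) s n :=
    DirichletCharacter.LFunction_eq_LSeries χ (by simpa using hs)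
  rw [hL]
  have ht := hsum.tendsto_sum_nat.sub_const (∑ n ∈ range m, LSeries.term (fun n ↦ χ n) s n)
  refine le_of_tendsto ht.norm ?_
  filter_upwards [Filter.eventually_ge_atTop m] with k hk
  rw [← sum_Ico_eq_sub _ hk]
  have h1 : ∀ n ∈ Ico m k, LSeries.term (fun n ↦ χ (n : ZMod q)) s n
      = χ (n : ZMod q) * (((n : ℝ) ^ (-s) : ℝ) : ℂ) := by
    intro n hn
    have hn0 : n ≠ 0 := by have := (mem_Ico.1 hn).1; omega
    rw [LSeries.term_of_ne_zero hn0, Complex.ofReal_cpow (by positivity), div_eq_mul_inv]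
    push_cast
    rw [Complex.cpow_neg]
  rw [sum_congr rfl h1]
  refine (norm_sum_mul_le _ (fun n ↦ (n : ℝ) ^ (-s)) q m (norm_sum_Ico_le χ hχ m) ?_ ?_ k hk).trans
    ?_
  · intro n hn
    have : (0 : ℝ) < n := by exact_mod_cast (by omega : 0 < n)
    exact Real.rpow_le_rpow_of_nonpos this (by push_cast; linarith) (by linarith)
  · intro n _; positivity
  · rw [div_eq_mul_inv, ← Real.rpow_neg_one]
    gcongr

/-- The tail of the conditionally convergent series at `1`. Mathlib's `LFunction` is a series only
for `1 < re s`, so the bound is proved there uniformly in `s` and passes to the limit `s → 1⁺`. -/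
lemma norm_LFunction_one_sub_le (m : ℕ) (hm : 1 ≤ m) :
    ‖χ.LFunction 1 - ∑ n ∈ range m, χ (n : ZMod q) / n‖ ≤ q / m := by
  have hc : ContinuousAt (fun s : ℝ ↦ χ.LFunction s
      - ∑ n ∈ range m, LSeries.term (fun n ↦ χ (n : ZMod q)) s n) 1 := by
    refine ContinuousAt.sub ?_ ?_
    · exact ((DirichletCharacter.differentiable_LFunction hχ).continuous.comp
        Complex.continuous_ofReal).continuousAt
    · refine Continuous.continuousAt (continuous_finsetSum _ fun n _ ↦ ?_)
      rcases eq_or_ne n 0 with rfl | hn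
      · simp only [LSeries.term_zero]; fun_prop
      · simp only [LSeries.term_of_ne_zero hn]
        have hn' : (n : ℂ) ≠ 0 := by exact_mod_cast hn
        refine continuous_const.div ?_ fun s ↦ by simp [Complex.cpow_eq_zero_iff, hn']
        exact Continuous.const_cpow Complex.continuous_ofReal (.inl hn')
  have ht := hc.tendsto.mono_left (nhdsWithin_le_nhds (s := Set.Ioi 1))
  have h := le_of_tendsto ht.norm (b := (q / m : ℝ)) (by
    filter_upwards [self_mem_nhdsWithin] with s hs
    exact norm_LFunction_sub_le_of_one_lt χ hχ m hm s hs)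
  refine le_of_eq_of_le (congrArg norm ?_) h
  rw [Complex.ofReal_one]
  congr 1
  refine sum_congr rfl fun n _ ↦ ?_
  rcases eq_or_ne n 0 with rfl | hn
  · simp
  · rw [LSeries.term_of_ne_zero hn, Complex.cpow_one]

variable (hreal : ∀ n : ZMod q, (χ n).im = 0)

include hreal in
lemma LFunction_one_im : (χ.LFunction 1).im = 0 := by
  by_contra h
  have h0 : 0 < |(χ.LFunction 1).im| := abs_pos.2 h
  obtain ⟨m, hm⟩ := exists_nat_gt (q / |(χ.LFunction 1).im|)
  have hm0 : (0 : ℝ) < m := lt_of_le_of_lt (by positivity) hm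
  have h1 := norm_LFunction_one_sub_le χ hχ m (by exact_mod_cast hm0)
  rw [sum_div_eq_ofReal χ hreal] at h1
  have h2 := (Complex.abs_im_le_norm _).trans h1
  rw [Complex.sub_im, Complex.ofReal_im, sub_zero, le_div_iff₀ hm0] at h2
  rw [div_lt_iff₀ h0] at hm
  linarith

lemma abs_smooth_sub_le (L m : ℕ) (Y : ℝ) (hY : 0 < Y) (hm : 1 ≤ m) (hL : m ≤ L) :
    |smooth (realChar χ hreal) L Y - ∑ n ∈ range m, realChar χ hreal n / n| ≤ m / Y + q / m := by
  set x := realChar χ hreal with hx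
  have hm0 : (0 : ℝ) < m := by exact_mod_cast hm
  have h1 : smooth x L Y = ∑ n ∈ range m, x n * (rho (n / Y) / n)
      + ∑ n ∈ Ico m (L + 1), x n * (rho (n / Y) / n) := by
    rw [sum_range_add_sum_Ico _ (by omega)]
    refine sum_subset (fun n hn ↦ by rw [mem_Ioc] at hn; rw [mem_range]; omega)
      fun n hn hn' ↦ ?_
    have : n = 0 := by rw [mem_Ioc] at hn'; rw [mem_range] at hn; omega
    simp [this]
  have h2 : |∑ n ∈ Ico m (L + 1), x n * (rho (n / Y) / n)| ≤ q / m := by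
    have h3 := norm_sum_mul_le (fun n ↦ χ (n : ZMod q)) (fun n ↦ rho (n / Y) / n) q m
      (norm_sum_Ico_le χ hχ m) ?_ ?_ (L + 1) (by omega)
    · have h4 : ∑ n ∈ Ico m (L + 1), χ (n : ZMod q) * ((rho (n / Y) / n : ℝ) : ℂ)
          = ((∑ n ∈ Ico m (L + 1), x n * (rho (n / Y) / n) : ℝ) : ℂ) := by
        push_cast
        simp_rw [hx, coe_realChar]
      rw [h4, Complex.norm_real, Real.norm_eq_abs] at h3
      refine h3.trans ?_
      rw [show (q : ℝ) / m = q * (1 / m) by ring]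
      refine mul_le_mul_of_nonneg_left ?_ (by positivity)
      exact div_le_div_of_nonneg_right (rho_le_one (by positivity)) hm0.le
    · intro n hn
      have hn0 : (0 : ℝ) < n := by exact_mod_cast (by omega : 0 < n)
      have h5 : rho ((n + 1 : ℕ) / Y) ≤ rho (n / Y) :=
        rho_antitoneOn (Set.mem_Ici.2 (by positivity)) (Set.mem_Ici.2 (by positivity))
          (by gcongr; simp)
      have h6 : 0 ≤ rho (n / Y) := rho_nonneg (by positivity)
      have h7 : (n : ℝ) ≤ (n + 1 : ℕ) := by simp
      exact div_le_div₀ h6 h5 hn0 h7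
    · intro n _
      exact div_nonneg (rho_nonneg (by positivity)) (by positivity)
  have h3 : |∑ n ∈ range m, x n * (rho (n / Y) / n) - ∑ n ∈ range m, x n / n| ≤ m / Y := by
    rw [← sum_sub_distrib]
    refine (abs_sum_le_sum_abs _ _).trans ((sum_le_sum (g := fun _ ↦ 1 / Y) fun n _ ↦ ?_).trans ?_)
    · rcases eq_or_ne n 0 with rfl | hn
      · simp [hY.le]
      · have hn0 : (0 : ℝ) < n := by exact_mod_cast Nat.pos_of_ne_zero hn
        rw [show x n * (rho (n / Y) / n) - x n / n = x n * -((1 - rho (n / Y)) / n) by ring,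
          abs_mul, abs_neg, abs_of_nonneg (div_nonneg
            (by linarith [rho_le_one (show 0 ≤ n / Y by positivity)]) hn0.le)]
        have h4 : (1 - rho (n / Y)) / n ≤ 1 / Y := by
          rw [div_le_iff₀ hn0]
          exact (one_sub_rho_le (by positivity)).trans_eq (by ring)
        refine (mul_le_mul (abs_realChar_le χ hreal n) h4 (div_nonneg
            (by linarith [rho_le_one (show 0 ≤ n / Y by positivity)]) hn0.le)
            zero_le_one).trans_eq (one_mul _)
    · simp [div_eq_mul_inv]
  rw [h1]
  rw [abs_le] at h2 h3 ⊢
  constructor <;> linarith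

/-- `L(1, χ)` is bounded by the smoothed sum at any scale `N ≥ 1`, up to `(√q + 6) / N`. -/
lemma LFunction_one_re_le (hprim : χ.IsPrimitive) (hquad : χ ^ 2 = 1) (N : ℕ) (hN : 1 ≤ N) :
    (χ.LFunction 1).re
      ≤ smooth (realChar χ hreal) (2 * N) N + (√q + 6) / N + 3 / 1000 := by
  have hq0 : (1 : ℝ) ≤ q := by exact_mod_cast NeZero.pos q
  have hN0 : (1 : ℝ) ≤ N := by exact_mod_cast hN
  set m := 1000 * q with hm
  have hm0 : 1 ≤ m := by have := NeZero.pos q; omega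
  have hm1 : (1 : ℝ) ≤ m := by exact_mod_cast hm0
  -- `L(1, χ)` is within `1 / 1000` of its partial sum up to `m`, hence close to the smoothed sum at
  -- the huge scale `Y`; `smooth_growth` brings the scale down from `Y` to `N`.
  set Y := 1000 * m * N with hYdef
  have hYN : N ≤ Y := by rw [hYdef]; nlinarith
  have hYm : m ≤ Y := by rw [hYdef]; nlinarith
  have hY0 : (1 : ℝ) ≤ Y := by exact_mod_cast hN.trans hYN
  have h1 := norm_LFunction_one_sub_le χ hχ m hm0
  rw [sum_div_eq_ofReal χ hreal] at h1
  have h2 := (abs_le.1 ((Complex.abs_re_le_norm _).trans h1)).2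
  rw [Complex.sub_re, Complex.ofReal_re] at h2
  have h3 := (abs_le.1 (abs_smooth_sub_le χ hχ hreal (2 * Y) m Y (by linarith) hm0 (by omega))).1
  have h4 := smooth_growth χ hreal hprim hquad hχ (2 * Y) (N := N) (Y := Y) hN0
    (by exact_mod_cast hYN) (by push_cast; exact le_rfl)
  have h5 : smooth (realChar χ hreal) (2 * Y) N = smooth (realChar χ hreal) (2 * N) N := by
    symm
    refine sum_subset (Ioc_subset_Ioc_right (by omega)) fun n hn hn' ↦ ?_
    have : 2 * N ≤ n := by rw [mem_Ioc] at hn hn'; omega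
    rw [rho_eq_zero, zero_div, mul_zero]
    rw [le_div_iff₀ (by linarith)]
    exact_mod_cast this
  have h6 : (q : ℝ) / m = 1 / 1000 := by
    rw [hm]; push_cast; field_simp
  have h7 : (m : ℝ) / Y ≤ 1 / 1000 := by
    rw [div_le_div_iff₀ (by linarith) (by norm_num), hYdef]; push_cast; nlinarith
  rw [h6] at h2 h3
  rw [h5] at h4
  linarith

end Char

/-! ### Numerics -/

lemma log_lower (q : ℕ) (hq : 5 * 10 ^ 50 ≤ q) : 116.7 ≤ Real.log q := by
  have h1 : Real.log (5 * 10 ^ 50 : ℝ) ≤ Real.log q :=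
    Real.log_le_log (by norm_num) (by exact_mod_cast hq)
  refine le_trans ?_ h1
  rw [show (5 * 10 ^ 50 : ℝ) = 2 ^ 168 * (5 * 10 ^ 50 / 2 ^ 168) by norm_num,
    Real.log_mul (by norm_num) (by norm_num), Real.log_pow]
  have h2 : 0.2515 ≤ Real.log (5 * 10 ^ 50 / 2 ^ 168) := by
    have := Real.one_sub_inv_le_log_of_pos (x := 5 * 10 ^ 50 / 2 ^ 168) (by norm_num)
    refine le_trans ?_ this
    norm_num
  have := Real.log_two_gt_d9
  push_cast
  linarith

lemma log_sixty_le : Real.log 60.1 ≤ 4.1 := by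
  rw [Real.log_le_iff_le_exp (by norm_num)]
  have h1 := Real.exp_one_gt_d9
  have h2 : Real.exp 4.1 = Real.exp 1 ^ 4 * Real.exp 0.1 := by
    rw [← Real.exp_nat_mul, ← Real.exp_add]; norm_num
  have h3 := Real.quadratic_le_exp_of_nonneg (x := 0.1) (by norm_num)
  have h4 : (2.718 : ℝ) ^ 4 ≤ Real.exp 1 ^ 4 := by gcongr; linarith
  rw [h2]
  nlinarith [Real.exp_pos 0.1]

lemma LFunction_one_re_le_log {q : ℕ} [NeZero q] (hq : 5 * 10 ^ 50 ≤ q)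
    (χ : DirichletCharacter ℂ q) (hprim : χ.IsPrimitive) (hχ : χ ≠ 1) (hquad : χ ^ 2 = 1)
    (hreal : ∀ n : ZMod q, (χ n).im = 0) :
    (χ.LFunction 1).re ≤ 9 / 20 * Real.log q := by
  have hlog := log_lower q hq
  have hq1 : (5 * 10 ^ 50 : ℝ) ≤ q := by exact_mod_cast hq
  have hs : (10 ^ 20 : ℝ) ≤ √q := by
    apply Real.le_sqrt_of_sq_le; linarith
  -- At the scale `N` the tent sum is at most `√q ≤ N / 30`, and `log (2N)` is still close to
  -- `(log q) / 2`.
  set N := ⌈30 * √q⌉₊ with hN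
  have hNge : 30 * √q ≤ N := Nat.le_ceil _
  have hNlt : (N : ℝ) < 30 * √q + 1 := Nat.ceil_lt_add_one (by positivity)
  have hN1 : 1 ≤ N := by
    have : (1 : ℝ) ≤ N := by linarith
    exact_mod_cast this
  have hN0 : (0 : ℝ) < N := by exact_mod_cast hN1
  have hhalf : Real.log √q = Real.log q / 2 := Real.log_sqrt (by positivity)
  have hUup : Real.log (2 * N) ≤ Real.log q / 2 + 4.1 := by
    have h1 : Real.log (2 * N) ≤ Real.log (60.1 * √q) :=
      Real.log_le_log (by positivity) (by linarith)
    rw [Real.log_mul (x := 60.1) (by norm_num) (by positivity), hhalf] at h1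
    linarith [log_sixty_le]
  have hUlo : 59 ≤ Real.log (2 * N) := by
    have h1 : Real.log (2 * √q) ≤ Real.log (2 * N) :=
      Real.log_le_log (by positivity) (by linarith)
    rw [Real.log_mul (by norm_num) (by positivity), hhalf] at h1
    linarith [Real.log_two_gt_d9]
  have hS : ∑ n ∈ Ioc 0 (2 * N), realChar χ hreal n * hat (n / (N : ℝ)) ≤ √q := by
    have h1 := (abs_le.1 (abs_sum_hat_nat_le χ hreal hprim hquad hχ (2 * N) N hN1 le_rfl)).2
    have h2 : ∑ n ∈ Ioc 0 (2 * N), realChar χ hreal n * (N * hat (n / (N : ℝ)))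
        = (∑ n ∈ Ioc 0 (2 * N), realChar χ hreal n * hat (n / (N : ℝ))) * N := by
      rw [sum_mul]
      exact sum_congr rfl fun n _ ↦ by ring
    rw [h2] at h1
    exact le_of_mul_le_mul_right h1 hN0
  have h1 := smooth_le (realChar χ hreal) (realChar_mem χ hreal hquad) N hN1 hUlo √q hS
    (by linarith)
  have h2 := LFunction_one_re_le χ hχ hreal hprim hquad N hN1
  have h3 : (√q + 6) / N ≤ 0.034 := by
    rw [div_le_iff₀ hN0]; linarith
  linarith

end OddQuadratic

theorem L_one_le_nine_twentieths_log_of_odd_quadratic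
    (q : ℕ) (hq : 5 * 10 ^ 50 ≤ q)
    (χ : DirichletCharacter ℂ q) (hprim : χ.IsPrimitive)
    (hnonprincipal : χ ≠ 1) (hquadratic : χ ^ 2 = 1)
    (hreal : ∀ n : ZMod q, (χ n).im = 0)
    (hpar : χ (-1) = -1) :
    haveI : NeZero q := ⟨by omega⟩
    χ.LFunction 1 ≤ (((9 / 20) * Real.log q : ℝ) : ℂ) := by
  have : NeZero q := ⟨by omega⟩
  rw [Complex.le_def]
  refine ⟨?_, ?_⟩
  · rw [Complex.ofReal_re]
    exact OddQuadratic.LFunction_one_re_le_log hq χ hprim hnonprincipal hquadratic hreal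
  · rw [Complex.ofReal_im]
    exact OddQuadratic.LFunction_one_im χ hnonprincipal hreal
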